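/- arXiv:1207.3007 — 6 statements merged into one kernel-verified Lean document; each statement's English description precedes it below -/
import Mathlib

section
/- Let r ≥ 1, let n ∈ N_r(F), and let M′ ⊆ M be two O-lattices in F^r such that n·M = M and n·M′ = M′. Then the quotient M/M′ is a finite-dimensional k-vector space, and the k-linear automorphism of M/M′ induced by multiplication by n has determinant 1 (it is unipotent). -/
/-- `k ⊆ k[[ϖ]] ⊆ k((ϖ))` is a tower of scalar actions. -/
instance LaurentSeries.isScalarTower (k : Type) [Field k] :
    IsScalarTower k (PowerSeries k) (LaurentSeries k) := by
  constructor
  intro x p f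
  show (HahnSeries.ofPowerSeries ℤ k (x • p)) * f = x • ((HahnSeries.ofPowerSeries ℤ k p) * f)
  rw [PowerSeries.smul_eq_C_mul, map_mul, HahnSeries.ofPowerSeries_C,
    ← HahnSeries.C_mul_eq_smul, mul_assoc]

theorem uni_det_one_of_nilp {k Q : Type} [Field k] [AddCommGroup Q] [Module k Q]
    [FiniteDimensional k Q] (φ : Q →ₗ[k] Q) (j : ℕ) (h : (φ - 1) ^ j = 0) :
    LinearMap.det φ = 1 := by
  have hn : IsNilpotent (1 - φ : Module.End k Q) := by
    have : IsNilpotent (-(φ - 1) : Module.End k Q) := IsNilpotent.neg ⟨j, h⟩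
    rwa [neg_sub] at this
  have hc := IsNilpotent.charpoly_eq_X_pow_finrank hn
  have he := LinearMap.eval_charpoly (1 - φ : Module.End k Q) 1
  rw [hc] at he
  simpa using he.symm

theorem uni_matrix_nilp {R : Type} [CommRing R] (r : ℕ) (n : Matrix (Fin r) (Fin r) R)
    (hdiag : ∀ i, n i i = 1) (hlow : ∀ i j : Fin r, j < i → n i j = 0) :
    (n - 1) ^ r = 0 := by
  have h1 := Matrix.charpoly_of_isUpperTriangular n (fun i j hij => hlow i j hij)
  have h2 := Matrix.aeval_self_charpoly n
  rw [h1] at h2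
  simpa [hdiag] using h2

theorem uni_exists_pow {k : Type} [Field k] {r : ℕ}
    (M' : Submodule (PowerSeries k) (Fin r → LaurentSeries k))
    (v : Fin r → LaurentSeries k)
    (hv : v ∈ Submodule.span (LaurentSeries k) (M' : Set (Fin r → LaurentSeries k))) :
    ∃ m : ℕ, (PowerSeries.X ^ m : PowerSeries k) • v ∈ M' := by
  induction hv using Submodule.span_induction with
  | mem x hx => exact ⟨0, by simpa using hx⟩
  | zero => exact ⟨0, by simp⟩
  | add x y _ _ hx hy =>
    obtain ⟨a, ha⟩ := hx
    obtain ⟨b, hb⟩ := hy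
    refine ⟨a + b, ?_⟩
    rw [smul_add]
    refine M'.add_mem ?_ ?_
    · rw [add_comm, pow_add, mul_smul]
      exact M'.smul_mem _ ha
    · rw [pow_add, mul_smul]
      exact M'.smul_mem _ hb
  | smul f x _ hx =>
    obtain ⟨a, ha⟩ := hx
    obtain ⟨⟨p, s, b, hb⟩, hp⟩ :=
      IsLocalization.surj (Submonoid.powers (PowerSeries.X : PowerSeries k)) f
    simp only at hb hp
    subst hb
    refine ⟨a + b, ?_⟩
    have hf : (PowerSeries.X ^ b : PowerSeries k) • f
        = algebraMap (PowerSeries k) (LaurentSeries k) p := by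
      rw [Algebra.smul_def, mul_comm, hp]
    have : (PowerSeries.X ^ (a + b) : PowerSeries k) • f • x
        = p • (PowerSeries.X ^ a : PowerSeries k) • x := by
      rw [pow_add, mul_smul, ← smul_assoc (PowerSeries.X ^ b : PowerSeries k) f x,
        hf, algebraMap_smul, smul_comm]
    rw [this]
    exact M'.smul_mem _ ha

theorem uni_finite_approx {k : Type} [Field k] {r : ℕ} (m : ℕ)
    (S : Finset (Fin r → LaurentSeries k)) (x : Fin r → LaurentSeries k)
    (hx : x ∈ Submodule.span (PowerSeries k) (S : Set (Fin r → LaurentSeries k))) :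
    ∃ y ∈ Submodule.span (PowerSeries k) (S : Set (Fin r → LaurentSeries k)),
      x - (PowerSeries.X ^ m : PowerSeries k) • y ∈ Submodule.span k
        (Set.range (fun p : Fin m × S => (PowerSeries.X ^ (p.1 : ℕ) : PowerSeries k) •
          (p.2 : Fin r → LaurentSeries k))) := by
  rw [← Submodule.mem_toAddSubmonoid, Submodule.span_eq_closure] at hx
  induction hx using AddSubmonoid.closure_induction with
  | mem x hx =>
    obtain ⟨p, -, g, hg, rfl⟩ := hx
    refine ⟨(PowerSeries.mk fun i => PowerSeries.coeff (i + m) p) • g,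
      Submodule.smul_mem _ _ (Submodule.subset_span hg), ?_⟩
    have h := PowerSeries.eq_X_pow_mul_shift_add_trunc m p
    have h2 : ((p.trunc m : Polynomial k) : PowerSeries k)
        = ∑ i : Fin m, PowerSeries.coeff i p • (PowerSeries.X ^ (i : ℕ) : PowerSeries k) := by
      ext j
      rw [map_sum, Polynomial.coeff_coe, PowerSeries.coeff_trunc]
      simp only [map_smul, PowerSeries.coeff_X_pow, smul_eq_mul, mul_ite, mul_one, mul_zero]
      rw [Fin.sum_univ_eq_sum_range (fun i => if j = i then PowerSeries.coeff i p else 0)]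
      simp
    have h3 : p • g - (PowerSeries.X ^ m : PowerSeries k) •
        ((PowerSeries.mk fun i => PowerSeries.coeff (i + m) p) • g)
        = ((p.trunc m : Polynomial k) : PowerSeries k) • g := by
      rw [← mul_smul, ← sub_smul]
      congr 1
      rw [sub_eq_iff_eq_add']
      exact h
    simp only
    rw [h3, h2, Finset.sum_smul]
    refine Submodule.sum_mem _ fun i _ => ?_
    rw [smul_assoc]
    exact Submodule.smul_mem _ _ (Submodule.subset_span ⟨(i, ⟨g, hg⟩), rfl⟩)
  | zero => exact ⟨0, Submodule.zero_mem _, by simp⟩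
  | add x y _ _ hx hy =>
    obtain ⟨a, ha, ha'⟩ := hx
    obtain ⟨b, hb, hb'⟩ := hy
    refine ⟨a + b, Submodule.add_mem _ ha hb, ?_⟩
    rw [smul_add, add_sub_add_comm]
    exact Submodule.add_mem _ ha' hb'

/-- if `n` is upper triangular unipotent over `F = k((ϖ))` and `M' ⊆ M` are
`O`-lattices in `F^r` with `n·M = M` and `n·M' = M'`, then the quotient `M/M'` (here
represented by any `k`-module `Q` that is a quotient of `M` with kernel `M'`) is a
finite-dimensional `k`-vector space, and the `k`-linear endomorphism of `M/M'` induced by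
multiplication by `n` has determinant `1`. -/
theorem unipotent_stabilizer_det_one_on_lattice_quotient
    (k : Type) [Field k] (r : ℕ) (hr : 1 ≤ r)
    (n : Matrix (Fin r) (Fin r) (LaurentSeries k))
    (hdiag : ∀ i, n i i = 1)
    (hlow : ∀ i j : Fin r, j < i → n i j = 0)
    (M M' : Submodule (PowerSeries k) (Fin r → LaurentSeries k))
    (hMfg : M.FG) (hM'fg : M'.FG)
    (hMspan : Submodule.span (LaurentSeries k)
      (M : Set (Fin r → LaurentSeries k)) = ⊤)
    (hM'span : Submodule.span (LaurentSeries k)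
      (M' : Set (Fin r → LaurentSeries k)) = ⊤)
    (hle : M' ≤ M)
    (hnM : M.map ((Matrix.mulVecLin n).restrictScalars (PowerSeries k)) = M)
    (hnM' : M'.map ((Matrix.mulVecLin n).restrictScalars (PowerSeries k)) = M')
    -- `Q` is the quotient `M/M'` as a `k`-vector space :
    (Q : Type) [AddCommGroup Q] [Module k Q]
    (q : ↥(M.restrictScalars k) →ₗ[k] Q)
    (hq : Function.Surjective q)
    (hker : LinearMap.ker q =
      (M'.restrictScalars k).comap (M.restrictScalars k).subtype) :
    FiniteDimensional k Q ∧
    ∀ φ : Q →ₗ[k] Q,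
      (∀ (x : Fin r → LaurentSeries k) (hx : x ∈ M.restrictScalars k)
          (hx' : n.mulVec x ∈ M.restrictScalars k),
        φ (q ⟨x, hx⟩) = q ⟨n.mulVec x, hx'⟩) →
      LinearMap.det φ = 1 := by
  have hfin : FiniteDimensional k Q := by
    obtain ⟨S, rfl⟩ := hMfg
    have hm : ∃ m : ℕ, ∀ y ∈ Submodule.span (PowerSeries k)
        (S : Set (Fin r → LaurentSeries k)), (PowerSeries.X ^ m : PowerSeries k) • y ∈ M' := by
      have hex : ∀ v : Fin r → LaurentSeries k,
          ∃ m : ℕ, (PowerSeries.X ^ m : PowerSeries k) • v ∈ M' :=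
        fun v => uni_exists_pow M' v (by rw [hM'span]; trivial)
      choose f hf using hex
      refine ⟨S.sup f, fun y hy => ?_⟩
      induction hy using Submodule.span_induction with
      | mem x hx =>
        obtain ⟨c, hc⟩ := Nat.exists_eq_add_of_le' (Finset.le_sup (f := f) hx)
        rw [hc, pow_add, mul_smul]
        exact M'.smul_mem _ (hf x)
      | zero => simp
      | add x y _ _ hx hy => rw [smul_add]; exact M'.add_mem hx hy
      | smul a x _ hx => rw [smul_comm]; exact M'.smul_mem _ hx
    obtain ⟨m, hm⟩ := hm
    set T := Set.range (fun p : Fin m × S => (PowerSeries.X ^ (p.1 : ℕ) : PowerSeries k) •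
          (p.2 : Fin r → LaurentSeries k)) with hT
    have hTf : FiniteDimensional k (Submodule.span k T) :=
      FiniteDimensional.span_of_finite k (Set.finite_range _)
    let N := Submodule.restrictScalars k (Submodule.span (PowerSeries k)
        (S : Set (Fin r → LaurentSeries k)))
    let W := (Submodule.span k T).comap N.subtype
    have hW : FiniteDimensional k W := by
      refine Module.Finite.of_injective
        ((N.subtype.restrict (p := W) (q := Submodule.span k T) (fun x hx => hx))) ?_
      intro a b hab
      have h1 : (a : N).1 = (b : N).1 :=
        congrArg (fun z : Submodule.span k T => (z : Fin r → LaurentSeries k)) hab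
      exact Subtype.ext (Subtype.ext h1)
    have htop : W.map q = ⊤ := by
      rw [eq_top_iff]
      rintro z -
      obtain ⟨⟨x, hx⟩, rfl⟩ := hq z
      obtain ⟨y, hy, hxy⟩ := uni_finite_approx m S x hx
      have hyM : (PowerSeries.X ^ m : PowerSeries k) • y ∈ N := Submodule.smul_mem _ _ hy
      refine ⟨⟨x, hx⟩ - ⟨_, hyM⟩, hxy, ?_⟩
      have h0 : q ⟨_, hyM⟩ = 0 := by
        rw [← LinearMap.mem_ker, hker]
        exact hm y hy
      rw [map_sub, h0, sub_zero]
    have : Module.Finite k (⊤ : Submodule k Q) := by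
      rw [← htop]; infer_instance
    exact Module.finite_def.mpr ((Submodule.fg_top _).mp (by simpa using this.fg_top))
  refine ⟨hfin, fun φ hφ => ?_⟩
  refine uni_det_one_of_nilp φ r ?_
  have hst : ∀ x ∈ M.restrictScalars k, n.mulVec x ∈ M.restrictScalars k := by
    intro x hx
    have : n.mulVec x ∈ M.map ((Matrix.mulVecLin n).restrictScalars (PowerSeries k)) :=
      ⟨x, hx, rfl⟩
    rw [hnM] at this
    exact this
  have key : ∀ (j : ℕ) (x : Fin r → LaurentSeries k) (hx : x ∈ M.restrictScalars k),
      ∃ h : ((n - 1) ^ j).mulVec x ∈ M.restrictScalars k,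
        ((φ - 1) ^ j) (q ⟨x, hx⟩) = q ⟨((n - 1) ^ j).mulVec x, h⟩ := by
    intro j
    induction j with
    | zero => intro x hx; exact ⟨by simpa using hx, by simp⟩
    | succ j ih =>
      intro x hx
      obtain ⟨h, he⟩ := ih x hx
      have e : ((n - 1) ^ (j + 1)).mulVec x
          = n.mulVec (((n - 1) ^ j).mulVec x) - ((n - 1) ^ j).mulVec x := by
        rw [pow_succ', ← Matrix.mulVec_mulVec, Matrix.sub_mulVec, Matrix.one_mulVec]
      refine ⟨by rw [e]; exact Submodule.sub_mem _ (hst _ h) h, ?_⟩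
      rw [pow_succ', Module.End.mul_apply, he, LinearMap.sub_apply, Module.End.one_apply,
        hφ _ h (hst _ h), ← map_sub]
      congr 1
      exact Subtype.ext e.symm
  ext z
  obtain ⟨⟨x, hx⟩, rfl⟩ := hq z
  obtain ⟨h, he⟩ := key r x hx
  rw [he]
  have h0 : (⟨((n - 1) ^ r).mulVec x, h⟩ : ↥(M.restrictScalars k)) = 0 := by
    apply Subtype.ext
    simp [uni_matrix_nilp r n hdiag hlow]
  rw [h0]
  simp
end

section
/- Let K be a field, r ≥ 1, and g ∈ GL_r(K). Suppose g = A·B⁻¹ where A is an invertible lower triangular matrix and B is an upper triangular matrix with all diagonal entries equal to 1. Write A = (a_{i,j}), B = (b_{i,j}), A⁻¹ = (ã_{i,j}), B⁻¹ = (b̃_{i,j}). Then all leading principal minors det(g_{[1,j],[1,j]}) (0 ≤ j ≤ r) are nonzero, and: a_{i,j} = det(g_{[1,j−1]∪{i},[1,j]}) / det(g_{[1,j−1],[1,j−1]}) for i ≥ j; b_{i,j} = (−1)^{j−i}·det(g_{[1,j−1],[1,j]∖{i}}) / det(g_{[1,j−1],[1,j−1]}) for i ≤ j; ã_{i,j}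 = (−1)^{i−j}·det(g_{[1,i]∖{j},[1,i−1]}) / det(g_{[1,i],[1,i]}) for i ≥ j; and b̃_{i,j} = det(g_{[1,i],[1,i−1]∪{j}}) / det(g_{[1,i],[1,i]}) for i ≤ j. -/
/-- `[1,j]` (1-indexed), i.e. the set of the first `j` indices of `Fin r`. -/
def Iseg (r j : ℕ) : Finset (Fin r) := Finset.univ.filter (fun l => (l : ℕ) < j)

/-- The minor `det (g_{I,J})` of a square matrix `g`, where the rows in `I` and the columns
in `J` are taken in increasing order (and `0` if `I`, `J` have different cardinalities;
the determinant of the empty matrix is `1`). -/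
noncomputable def gMinor {R : Type} [CommRing R] {r : ℕ}
    (g : Matrix (Fin r) (Fin r) R) (I J : Finset (Fin r)) : R :=
  if h : I.card = J.card then
    Matrix.det (Matrix.of fun a b : Fin I.card =>
      g ((I.orderIsoOfFin rfl a : Fin r)) ((J.orderIsoOfFin rfl (Fin.cast h b) : Fin r)))
  else 0

theorem gMinor_eq {R : Type} [CommRing R] {r n : ℕ} (g : Matrix (Fin r) (Fin r) R)
    (I J : Finset (Fin r)) (e f : Fin n → Fin r) (he : StrictMono e) (hf : StrictMono f)
    (hI : I = Finset.univ.image e) (hJ : J = Finset.univ.image f) :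
    gMinor g I J = (g.submatrix e f).det := by
  have cI : I.card = n := by
    rw [hI, Finset.card_image_of_injective _ he.injective]; simp
  have cJ : J.card = n := by
    rw [hJ, Finset.card_image_of_injective _ hf.injective]; simp
  have h1 := Finset.orderEmbOfFin_unique cI (f := e) (fun x => by simp [hI]) he
  have h2 := Finset.orderEmbOfFin_unique cJ (f := f) (fun x => by simp [hJ]) hf
  clear hI hJ
  subst cI
  unfold gMinor
  rw [dif_pos cJ.symm]
  congr 1
  ext a b
  rw [h1, h2]
  rfl

theorem sum_castLE_eq {R : Type} [CommRing R] {r n : ℕ} (h : n ≤ r) (F : Fin r → R)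
    (hF : ∀ l : Fin r, n ≤ l.val → F l = 0) : ∑ l, F l = ∑ l : Fin n, F (Fin.castLE h l) := by
  symm
  apply Finset.sum_of_injOn (Fin.castLE h)
  · exact (Fin.castLE_injective h).injOn
  · simp
  · intro l _ hl
    apply hF
    by_contra hc
    exact hl ⟨⟨l, by omega⟩, by simp, rfl⟩
  · simp

theorem image_castLE {r n : ℕ} (h : n ≤ r) :
    Iseg r n = Finset.univ.image (Fin.castLE h) := by
  ext l
  simp only [Iseg, Finset.mem_filter, Finset.mem_univ, true_and, Finset.mem_image]
  constructor
  · intro hl; exact ⟨⟨l, hl⟩, rfl⟩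
  · rintro ⟨a, rfl⟩; simp

/-- first `n` indices followed by `i` -/
def snocI {r : ℕ} (n : ℕ) (h : n ≤ r) (i : Fin r) : Fin (n + 1) → Fin r :=
  Fin.snoc (α := fun _ => Fin r) (Fin.castLE h) i

theorem snocI_castSucc {r n : ℕ} (h : n ≤ r) (i : Fin r) (k : Fin n) :
    snocI n h i k.castSucc = Fin.castLE h k := by simp [snocI]

theorem snocI_last {r n : ℕ} (h : n ≤ r) (i : Fin r) :
    snocI n h i (Fin.last n) = i := by simp [snocI]

theorem snocI_mono {r n : ℕ} (h : n ≤ r) (i : Fin r) (hi : n ≤ i.val) :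
    StrictMono (snocI n h i) := by
  intro a b hab
  induction a using Fin.lastCases with
  | last => exact absurd hab (not_lt.mpr (Fin.le_last b))
  | cast a =>
    induction b using Fin.lastCases with
    | last => 
      rw [snocI_castSucc, snocI_last, Fin.lt_def, Fin.val_castLE]; omega
    | cast b =>
      rw [snocI_castSucc, snocI_castSucc]
      exact hab

theorem image_snocI {r n : ℕ} (h : n ≤ r) (i : Fin r) :
    Iseg r n ∪ {i} = Finset.univ.image (snocI n h i) := by
  rw [image_castLE h]
  ext l
  simp only [Finset.mem_union, Finset.mem_image, Finset.mem_univ, true_and, Finset.mem_singleton]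
  rw [Fin.exists_fin_succ' (P := fun a => snocI n h i a = l)]
  simp only [snocI_castSucc, snocI_last]
  tauto

theorem image_succAbove {r n : ℕ} (h : n + 1 ≤ r) (i : Fin (n + 1)) :
    Iseg r (n + 1) \ {Fin.castLE h i} = Finset.univ.image (Fin.castLE h ∘ i.succAbove) := by
  rw [image_castLE h]
  ext l
  simp only [Finset.mem_sdiff, Finset.mem_image, Finset.mem_univ, true_and, Finset.mem_singleton,
    Function.comp]
  constructor
  · rintro ⟨⟨a, rfl⟩, hne⟩
    have : a ≠ i := fun h => hne (by rw [h])
    obtain ⟨b, rfl⟩ := Fin.exists_succAbove_eq this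
    exact ⟨b, rfl⟩
  · rintro ⟨b, rfl⟩
    exact ⟨⟨_, rfl⟩, fun h' => Fin.succAbove_ne i b (Fin.castLE_injective h h')⟩

/-- minors formulas for the `A·B⁻¹` (lower × upper unipotent) decomposition of an
invertible matrix `g` over a field. Indices below are 0-indexed: the math index set `[1,j]`
corresponds to `Iseg r j`. -/
theorem gauss_decomposition_minors
    (K : Type) [Field K] (r : ℕ) (hr : 1 ≤ r)
    (g A B : Matrix (Fin r) (Fin r) K)
    (hA : IsUnit A.det)
    (hAlow : ∀ i j : Fin r, i < j → A i j = 0)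
    (hBup : ∀ i j : Fin r, j < i → B i j = 0)
    (hBdiag : ∀ i, B i i = 1)
    (hg : g = A * B⁻¹) :
    (∀ j : ℕ, j ≤ r → gMinor g (Iseg r j) (Iseg r j) ≠ 0) ∧
    (∀ i j : Fin r, j ≤ i →
      A i j = gMinor g (Iseg r j.val ∪ {i}) (Iseg r (j.val + 1)) /
        gMinor g (Iseg r j.val) (Iseg r j.val)) ∧
    (∀ i j : Fin r, i ≤ j →
      B i j = (-1 : K) ^ (j.val - i.val) *
        gMinor g (Iseg r j.val) (Iseg r (j.val + 1) \ {i}) /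
        gMinor g (Iseg r j.val) (Iseg r j.val)) ∧
    (∀ i j : Fin r, j ≤ i →
      A⁻¹ i j = (-1 : K) ^ (i.val - j.val) *
        gMinor g (Iseg r (i.val + 1) \ {j}) (Iseg r i.val) /
        gMinor g (Iseg r (i.val + 1)) (Iseg r (i.val + 1))) ∧
    (∀ i j : Fin r, i ≤ j →
      B⁻¹ i j = gMinor g (Iseg r (i.val + 1)) (Iseg r i.val ∪ {j}) /
        gMinor g (Iseg r (i.val + 1)) (Iseg r (i.val + 1))) := by
  have castmono : ∀ {n : ℕ} (h : n ≤ r), StrictMono (Fin.castLE h) :=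
    fun h => Fin.strictMono_castLE h
  have hBdet : B.det = 1 := by
    rw [Matrix.det_of_isUpperTriangular (fun i j h => hBup i j h)]
    simp [hBdiag]
  have hAdet : A.det = ∏ i, A i i :=
    Matrix.det_of_isLowerTriangular A (fun i j h => hAlow i j h)
  have hAd : ∀ i, A i i ≠ 0 := by
    rw [hAdet] at hA
    have := hA.ne_zero
    rw [Finset.prod_ne_zero_iff] at this
    exact fun i => this i (Finset.mem_univ _)
  have hBu : IsUnit B.det := by rw [hBdet]; exact isUnit_one
  have hUup : ∀ i j : Fin r, j < i → B⁻¹ i j = 0 := by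
    let _ := Matrix.invertibleOfIsUnitDet B hBu
    have := Matrix.blockTriangular_inv_of_blockTriangular
      (M := B) (b := id) (fun i j h => hBup i j h)
    exact fun i j h => this h
  have hAilow : ∀ i j : Fin r, i < j → A⁻¹ i j = 0 := by
    let _ := Matrix.invertibleOfIsUnitDet A hA
    have := Matrix.blockTriangular_inv_of_blockTriangular
      (M := A) (b := OrderDual.toDual) (fun i j h => hAlow i j h)
    exact fun i j h => this h
  have hUdiag : ∀ i, B⁻¹ i i = 1 := by
    intro i
    have h1 : (B * B⁻¹) i i = 1 := by rw [Matrix.mul_nonsing_inv _ hBu]; simp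
    rw [Matrix.mul_apply, Finset.sum_eq_single i] at h1
    · simpa [hBdiag] using h1
    · intro k _ hk
      rcases lt_or_gt_of_ne hk with h | h
      · rw [hBup _ _ h, zero_mul]
      · rw [hUup _ _ h, mul_zero]
    · simp
  have hgB : g * B = A := by
    rw [hg, Matrix.mul_assoc, Matrix.nonsing_inv_mul _ hBu, Matrix.mul_one]
  have hAg : A⁻¹ * g = B⁻¹ := by
    rw [hg, ← Matrix.mul_assoc, Matrix.nonsing_inv_mul _ hA, Matrix.one_mul]
  -- product with an upper triangular matrix on the right
  have prodR : ∀ (M N : Matrix (Fin r) (Fin r) K) (_ : ∀ i j : Fin r, j < i → N i j = 0)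
      (m n : ℕ) (h : n ≤ r) (e : Fin m → Fin r),
      (M * N).submatrix e (Fin.castLE h) =
        M.submatrix e (Fin.castLE h) * N.submatrix (Fin.castLE h) (Fin.castLE h) := by
    intro M N hN m n h e
    ext a b
    simp only [Matrix.submatrix_apply, Matrix.mul_apply]
    apply sum_castLE_eq h (fun l => M (e a) l * N l (Fin.castLE h b))
    intro l hl
    rw [hN _ _ (by rw [Fin.lt_def, Fin.val_castLE]; omega), mul_zero]
  have prodL : ∀ (M N : Matrix (Fin r) (Fin r) K) (_ : ∀ i j : Fin r, i < j → M i j = 0)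
      (m n : ℕ) (h : n ≤ r) (e : Fin m → Fin r),
      (M * N).submatrix (Fin.castLE h) e =
        M.submatrix (Fin.castLE h) (Fin.castLE h) * N.submatrix (Fin.castLE h) e := by
    intro M N hM m n h e
    ext a b
    simp only [Matrix.submatrix_apply, Matrix.mul_apply]
    apply sum_castLE_eq h (fun l => M (Fin.castLE h a) l * N l (e b))
    intro l hl
    rw [hM _ _ (by rw [Fin.lt_def, Fin.val_castLE]; omega), zero_mul]
  have detU : ∀ (n : ℕ) (h : n ≤ r),
      (B⁻¹.submatrix (Fin.castLE h) (Fin.castLE h)).det = 1 := by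
    intro n h
    rw [Matrix.det_of_isUpperTriangular]
    · simp [hUdiag]
    · exact fun i j hij => hUup _ _ (castmono h hij)
  have detA : ∀ (n : ℕ) (h : n ≤ r), (A.submatrix (Fin.castLE h) (Fin.castLE h)).det =
      ∏ k : Fin n, A (Fin.castLE h k) (Fin.castLE h k) := by
    intro n h
    rw [Matrix.det_of_isLowerTriangular]
    · simp
    · exact fun i j hij => hAlow _ _ (castmono h hij)
  have detg : ∀ (n : ℕ) (h : n ≤ r), (g.submatrix (Fin.castLE h) (Fin.castLE h)).det =
      ∏ k : Fin n, A (Fin.castLE h k) (Fin.castLE h k) := by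
    intro n h
    rw [hg, prodR _ _ hUup, Matrix.det_mul, detU, detA, mul_one]
  have lead : ∀ (n : ℕ) (h : n ≤ r), gMinor g (Iseg r n) (Iseg r n) =
      ∏ k : Fin n, A (Fin.castLE h k) (Fin.castLE h k) := by
    intro n h
    rw [gMinor_eq g _ _ _ _ (castmono h) (castmono h) (image_castLE h) (image_castLE h), detg]
  have pne : ∀ (n : ℕ) (h : n ≤ r),
      ∏ k : Fin n, A (Fin.castLE h k) (Fin.castLE h k) ≠ 0 :=
    fun n h => Finset.prod_ne_zero_iff.mpr (fun k _ => hAd _)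
  have hlastc : ∀ (j : Fin r) (h : j.val + 1 ≤ r), Fin.castLE h (Fin.last j.val) = j :=
    fun j h => Fin.ext rfl
  have psucc : ∀ (j : Fin r) (h : j.val + 1 ≤ r) (h' : j.val ≤ r),
      ∏ k : Fin (j.val + 1), A (Fin.castLE h k) (Fin.castLE h k) =
      (∏ k : Fin j.val, A (Fin.castLE h' k) (Fin.castLE h' k)) * A j j := by
    intro j h h'
    rw [Fin.prod_univ_castSucc, hlastc]
    rfl
  refine ⟨?_, ?_, ?_, ?_, ?_⟩
  · intro n h
    rw [lead n h]; exact pne n h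
  · intro i j hij
    have h1 : j.val + 1 ≤ r := j.isLt
    have h0 : j.val ≤ r := by omega
    rw [lead _ h0, eq_div_iff (pne _ h0), gMinor_eq g _ _ _ _ (snocI_mono h0 i hij) (castmono h1)
      (image_snocI h0 i) (image_castLE h1), hg, prodR _ _ hUup, Matrix.det_mul, detU, mul_one,
      Matrix.det_of_isLowerTriangular, Fin.prod_univ_castSucc]
    · simp only [Matrix.submatrix_apply, snocI_castSucc, snocI_last, hlastc]
      rw [mul_comm]; rfl
    · intro a b hab
      have hab : a < b := hab
      have := castmono h1 hab
      induction a using Fin.lastCases with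
      | last => exact absurd hab (not_lt.mpr (Fin.le_last b))
      | cast a =>
        rw [Matrix.submatrix_apply, snocI_castSucc]
        exact hAlow _ _ this
  · intro i j hij
    have h1 : j.val + 1 ≤ r := j.isLt
    have h0 : j.val ≤ r := by omega
    obtain ⟨i', rfl⟩ : ∃ i' : Fin (j.val + 1), i = Fin.castLE h1 i' :=
      ⟨⟨i.val, Nat.lt_succ_of_le hij⟩, rfl⟩
    rw [lead _ h0, eq_div_iff (pne _ h0), gMinor_eq g _ _ _ _ (castmono h0)
      ((castmono h1).comp (Fin.strictMono_succAbove i')) (image_castLE h0) (image_succAbove h1 i')]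
    have e1 := prodR g B hBup _ _ h1 (Fin.castLE h1)
    rw [hgB] at e1
    have e2 := congrArg (fun M => ((g.submatrix (Fin.castLE h1) (Fin.castLE h1)).adjugate * M)
      i' (Fin.last _)) e1
    simp only [← Matrix.mul_assoc, Matrix.adjugate_mul, Matrix.smul_mul, Matrix.one_mul,
      Matrix.smul_apply, smul_eq_mul, detg, Matrix.submatrix_apply, hlastc] at e2
    rw [Matrix.mul_apply, Finset.sum_eq_single (Fin.last _), psucc j h1 h0,
      Matrix.adjugate_fin_succ_eq_det_submatrix, Matrix.submatrix_apply, hlastc] at e2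
    · apply mul_right_cancel₀ (hAd j)
      have hs : (-1 : K) ^ (j.val - (Fin.castLE h1 i').val) =
          (-1 : K) ^ ((Fin.last j.val : ℕ) + (i' : ℕ)) := by
        have : (Fin.last j.val : ℕ) + (i' : ℕ) = (j.val - (Fin.castLE h1 i').val) + 2 * i'.val := by
          have := i'.isLt
          simp only [Fin.val_last, Fin.val_castLE]; omega
        rw [this, pow_add, pow_mul]; simp
      have e3 : ((g.submatrix (Fin.castLE h1) (Fin.castLE h1)).submatrix
          (Fin.last j.val).succAbove i'.succAbove).det =
          (g.submatrix (Fin.castLE h0) (Fin.castLE h1 ∘ i'.succAbove)).det := by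
        rw [Fin.succAbove_last, Matrix.submatrix_submatrix]
        rfl
      rw [hs]
      rw [e3] at e2
      linear_combination -e2
    · intro k _ hk
      rw [Matrix.submatrix_apply, hlastc, hAlow, mul_zero]
      have := castmono h1 (Fin.lt_last_iff_ne_last.mpr hk)
      rwa [hlastc] at this
    · simp
  · intro i j hij
    have h1 : i.val + 1 ≤ r := i.isLt
    have h0 : i.val ≤ r := by omega
    obtain ⟨j', rfl⟩ : ∃ j' : Fin (i.val + 1), j = Fin.castLE h1 j' :=
      ⟨⟨j.val, Nat.lt_succ_of_le hij⟩, rfl⟩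
    rw [lead _ h1, eq_div_iff (pne _ h1), gMinor_eq g _ _ _ _
      ((castmono h1).comp (Fin.strictMono_succAbove j')) (castmono h0)
      (image_succAbove h1 j') (image_castLE h0)]
    have e1 := prodL A⁻¹ g hAilow _ _ h1 (Fin.castLE h1)
    rw [hAg] at e1
    have e2 := congrArg (fun M => (M * (g.submatrix (Fin.castLE h1) (Fin.castLE h1)).adjugate)
      (Fin.last _) j') e1
    simp only [Matrix.mul_assoc, Matrix.mul_adjugate, Matrix.mul_smul, Matrix.mul_one,
      Matrix.smul_apply, smul_eq_mul, detg, Matrix.submatrix_apply, hlastc] at e2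
    rw [Matrix.mul_apply, Finset.sum_eq_single (Fin.last _), 
      Matrix.adjugate_fin_succ_eq_det_submatrix, Matrix.submatrix_apply, hlastc, hUdiag,
      one_mul] at e2
    · have hs : (-1 : K) ^ (i.val - (Fin.castLE h1 j').val) =
          (-1 : K) ^ ((j' : ℕ) + (Fin.last i.val : ℕ)) := by
        have : (j' : ℕ) + (Fin.last i.val : ℕ) = (i.val - (Fin.castLE h1 j').val) + 2 * j'.val := by
          have := j'.isLt
          simp only [Fin.val_last, Fin.val_castLE]; omega
        rw [this, pow_add, pow_mul]; simp
      rw [hs, mul_comm (A⁻¹ _ _), ← e2, Fin.succAbove_last, Matrix.submatrix_submatrix]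
      rfl
    · intro k _ hk
      rw [Matrix.submatrix_apply, hlastc, hUup, zero_mul]
      have := castmono h1 (Fin.lt_last_iff_ne_last.mpr hk)
      rwa [hlastc] at this
    · simp
  · intro i j hij
    have h1 : i.val + 1 ≤ r := i.isLt
    have h0 : i.val ≤ r := by omega
    rw [lead _ h1, eq_div_iff (pne _ h1), gMinor_eq g _ _ _ _ (castmono h1) (snocI_mono h0 j hij)
      (image_castLE h1) (image_snocI h0 j), hg, prodL _ _ hAlow, Matrix.det_mul, detA,
      Matrix.det_of_isUpperTriangular, Fin.prod_univ_castSucc (n := i.val) (f := fun k =>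
        (B⁻¹.submatrix (Fin.castLE h1) (snocI i.val h0 j)) k k)]
    · simp only [Matrix.submatrix_apply, snocI_castSucc, snocI_last, hlastc]
      have e3 : ∏ k : Fin i.val, B⁻¹ (Fin.castLE h1 k.castSucc) (Fin.castLE h0 k) = 1 :=
        Finset.prod_eq_one (fun k _ => hUdiag (Fin.castLE h0 k))
      rw [e3, one_mul, mul_comm]
    · intro a b hab
      have hab : b < a := hab
      have := castmono h1 hab
      induction b using Fin.lastCases with
      | last => exact absurd hab (not_lt.mpr (Fin.le_last a))
      | cast b =>
        rw [Matrix.submatrix_apply, snocI_castSucc]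
        exact hUup _ _ this
end

section
/- Let k be a field, r ≥ 1, y ∈ M_r(k), and work over the field k(ϖ) of rational functions. Set g = y + ϖ·Id_r and a_i = det(g_{[1,i],[1,i]}) for 1 ≤ i ≤ r (a monic polynomial of degree i in ϖ; set a₀ = 1), and let w₀ be the permutation matrix of the permutation i ↦ r+1−i. Then w₀·g = n·w₀·t·n′ in GL_r(k(ϖ)), where: t = diag(a₁, a₂/a₁, …, a_r/a_{r−1}); n is the upper triangular unipotent matrix with entries n_{i,j} = det(g_{[1,r−j]∪{r+1−i},[1,r+1−j]}) / det(g_{[1,r+1−j],[1,r+1−j]}) for i < j; and n′ is the upper triangular unipotent matrix that is the inverse of the unipotent matrix whose (i,j)-entry for i < j is (−1)^{j−i}·det(g_{[1,j−1],[1,j]∖{i}}) / det(g_{[1,j−1],[1,j−1]}), equivalently n′_{i,j} = det(g_{[1,i],[1,i−1]∪{j}}) / det(g_{[1,i],[1,i]}) for i < j. Moreover the inverse of n has entries (n⁻¹)_{i,j} = (−1)^{j−i}·det(g_{[1,r+1−i]∖{r+1−j},[1,r−i]}) / det(g_{[1,r−i],[1,r−i]}) for i < j. -/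
namespace BruhatAux

theorem gMinor_image {R : Type} [CommRing R] {r m : ℕ} (g : Matrix (Fin r) (Fin r) R)
    (f h : Fin m → Fin r) (hf : StrictMono f) (hh : StrictMono h) (I J : Finset (Fin r))
    (hI : I = Finset.univ.image f) (hJ : J = Finset.univ.image h) :
    gMinor g I J = (g.submatrix f h).det := by
  have cI : I.card = m := by
    rw [hI, Finset.card_image_of_injective _ hf.injective]; simp
  have cJ : J.card = m := by
    rw [hJ, Finset.card_image_of_injective _ hh.injective]; simp
  subst cI
  have e1 : f = I.orderEmbOfFin rfl :=
    Finset.orderEmbOfFin_unique rfl (fun x => by rw [hI]; simp) hf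
  have e2 : h = J.orderEmbOfFin cJ :=
    Finset.orderEmbOfFin_unique cJ (fun x => by rw [hJ]; simp) hh
  have hc : I.card = J.card := cJ.symm
  rw [gMinor, dif_pos hc]
  congr 1
  ext a b
  rw [Matrix.submatrix_apply, e1, e2]
  simp only [Matrix.of_apply, Finset.coe_orderIsoOfFin_apply]
  congr 1

theorem gMinor_transpose {R : Type} [CommRing R] {r : ℕ} (g : Matrix (Fin r) (Fin r) R)
    (I J : Finset (Fin r)) : gMinor g.transpose I J = gMinor g J I := by
  by_cases h : I.card = J.card
  · have hI : I = Finset.univ.image (I.orderEmbOfFin rfl) := by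
      ext x; simp only [Finset.image_orderEmbOfFin_univ]
    have hJ : J = Finset.univ.image (J.orderEmbOfFin h.symm) := by
      ext x; simp only [Finset.image_orderEmbOfFin_univ]
    rw [gMinor_image g.transpose _ _ (I.orderEmbOfFin rfl).strictMono
      (J.orderEmbOfFin h.symm).strictMono I J hI hJ,
      gMinor_image g _ _ (J.orderEmbOfFin h.symm).strictMono (I.orderEmbOfFin rfl).strictMono
        J I hJ hI, ← Matrix.det_transpose]
    rfl
  · rw [gMinor, gMinor, dif_neg h, dif_neg (Ne.symm h)]

theorem gMinor_map {R S : Type} [CommRing R] [CommRing S] (φ : R →+* S) {r : ℕ}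
    (g : Matrix (Fin r) (Fin r) R) (I J : Finset (Fin r)) :
    φ (gMinor g I J) = gMinor (g.map φ) I J := by
  unfold gMinor
  split_ifs with h
  · rw [RingHom.map_det]; rfl
  · simp

theorem Iseg_eq {r m : ℕ} (h : m ≤ r) : Iseg r m = Finset.univ.image (Fin.castLE h) := by
  ext x
  simp only [Iseg, Finset.mem_filter, Finset.mem_univ, true_and, Finset.mem_image]
  constructor
  · intro hx; exact ⟨⟨x, hx⟩, rfl⟩
  · rintro ⟨y, rfl⟩; exact y.2

theorem Iseg_union {r m : ℕ} (h : m ≤ r) (a : Fin r) :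
    Iseg r m ∪ {a} = Finset.univ.image (Fin.snoc (α := fun _ => Fin r) (Fin.castLE h) a) := by
  rw [Iseg_eq h]
  ext x
  simp only [Finset.mem_union, Finset.mem_image, Finset.mem_univ, true_and, Finset.mem_singleton,
    Fin.exists_fin_succ', Fin.snoc_castSucc, Fin.snoc_last]
  simp [eq_comm]

theorem Iseg_succ {r : ℕ} (j : Fin r) : Iseg r (j.val + 1) = Iseg r j.val ∪ {j} := by
  ext x
  simp only [Iseg, Finset.mem_filter, Finset.mem_univ, true_and, Finset.mem_union,
    Finset.mem_singleton, Fin.ext_iff]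
  omega

theorem Iseg_sdiff {r m : ℕ} (h : m + 1 ≤ r) (i : Fin (m + 1)) :
    Iseg r (m + 1) \ {Fin.castLE h i} =
      Finset.univ.image (fun p => Fin.castLE h (i.succAbove p)) := by
  rw [Iseg_eq h]
  ext x
  simp only [Finset.mem_sdiff, Finset.mem_image, Finset.mem_univ, true_and, Finset.mem_singleton]
  constructor
  · rintro ⟨⟨y, rfl⟩, hy⟩
    have : y ≠ i := fun e => hy (by rw [e])
    obtain ⟨z, rfl⟩ := Fin.exists_succAbove_eq this
    exact ⟨z, rfl⟩
  · rintro ⟨z, rfl⟩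
    exact ⟨⟨_, rfl⟩, fun e => Fin.succAbove_ne i z (Fin.castLE_injective h e)⟩

theorem snoc_strictMono {r m : ℕ} (h : m ≤ r) (a : Fin r) (ha : m ≤ a.val) :
    StrictMono (Fin.snoc (α := fun _ => Fin r) (Fin.castLE h) a) := by
  intro p q hpq
  induction q using Fin.lastCases with
  | last =>
    induction p using Fin.lastCases with
    | last => exact absurd hpq (lt_irrefl _)
    | cast p =>
      simp only [Fin.snoc_castSucc, Fin.snoc_last, Fin.lt_def, Fin.val_castLE]
      omega
  | cast q =>
    induction p using Fin.lastCases with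
    | last => exact absurd hpq (not_lt.mpr (Fin.le_last _))
    | cast p =>
      rw [Fin.snoc_castSucc, Fin.snoc_castSucc]
      exact hpq

variable {K : Type} [Field K] {r : ℕ}

noncomputable def Bm (G : Matrix (Fin r) (Fin r) K) : Matrix (Fin r) (Fin r) K :=
  Matrix.of fun i j =>
    if i = j then 1 else if i < j then
      (-1 : K) ^ (j.val - i.val) * gMinor G (Iseg r j.val) (Iseg r (j.val + 1) \ {i}) /
        gMinor G (Iseg r j.val) (Iseg r j.val)
    else 0

noncomputable def Lm (G : Matrix (Fin r) (Fin r) K) : Matrix (Fin r) (Fin r) K :=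
  Matrix.of fun a b =>
    if a = b then 1 else if b < a then
      gMinor G (Iseg r b.val ∪ {a}) (Iseg r (b.val + 1)) /
        gMinor G (Iseg r (b.val + 1)) (Iseg r (b.val + 1))
    else 0

noncomputable def Tm (G : Matrix (Fin r) (Fin r) K) : Fin r → K := fun l =>
  gMinor G (Iseg r (l.val + 1)) (Iseg r (l.val + 1)) / gMinor G (Iseg r l.val) (Iseg r l.val)

theorem castLE_strictMono {m : ℕ} (h : m ≤ r) : StrictMono (Fin.castLE h) :=
  fun _ _ hpq => hpq

theorem Bm_castLE (G : Matrix (Fin r) (Fin r) K)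
    (hd : ∀ i ≤ r, gMinor G (Iseg r i) (Iseg r i) ≠ 0) (j : Fin r) (i : Fin (j.val + 1)) :
    Bm G (Fin.castLE j.2 i) j = (-1) ^ (j.val + i.val) *
      (G.submatrix (Fin.castLE j.2.le) (fun p => Fin.castLE j.2 (i.succAbove p))).det /
        gMinor G (Iseg r j.val) (Iseg r j.val) := by
  have key := gMinor_image G (Fin.castLE j.2.le) (fun p => Fin.castLE j.2 (i.succAbove p))
    (castLE_strictMono _) ((castLE_strictMono _).comp (Fin.strictMono_succAbove i))
    (Iseg r j.val) (Iseg r (j.val + 1) \ {Fin.castLE j.2 i}) (Iseg_eq _) (Iseg_sdiff _ _)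
  have hdj := hd j.val j.2.le
  rw [← key]
  simp only [Bm, Matrix.of_apply]
  split_ifs with h1 h2
  · have hv : i.val = j.val := congrArg Fin.val h1
    have hs : Iseg r (j.val + 1) \ {Fin.castLE j.2 i} = Iseg r j.val := by
      rw [h1]; ext x
      simp only [Iseg, Finset.mem_sdiff, Finset.mem_filter, Finset.mem_univ, true_and,
        Finset.mem_singleton, Fin.ext_iff]
      omega
    rw [hs, hv, ← two_mul, pow_mul]
    simp [hdj]
  · have hv : i.val ≤ j.val := Nat.lt_succ_iff.mp i.2
    congr 2
    have : j.val + i.val = (j.val - i.val) + 2 * i.val := by omega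
    rw [Fin.val_castLE, this, pow_add, pow_mul]; simp
  · exfalso
    have : i.val < j.val + 1 := i.2
    simp only [Fin.ext_iff, Fin.lt_def, Fin.val_castLE] at h1 h2
    omega

theorem mul_Bm (G : Matrix (Fin r) (Fin r) K)
    (hd : ∀ i ≤ r, gMinor G (Iseg r i) (Iseg r i) ≠ 0) :
    G * Bm G = Lm G * Matrix.diagonal (Tm G) := by
  ext a j
  rw [Matrix.mul_diagonal, Matrix.mul_apply]
  have hdj := hd j.val j.2.le
  have hdj1 := hd (j.val + 1) j.2
  have hsum : ∑ i, G a i * Bm G i j = ∑ i : Fin (j.val + 1),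
      G a (Fin.castLE j.2 i) * Bm G (Fin.castLE j.2 i) j := by
    rw [← Finset.sum_image (s := Finset.univ) (g := Fin.castLE (show j.val + 1 ≤ r from j.2))
      (f := fun i => G a i * Bm G i j) ((Fin.castLE_injective _).injOn)]
    symm
    apply Finset.sum_subset (Finset.subset_univ _)
    intro x _ hx
    rw [← Iseg_eq] at hx
    have hx' : j.val < x.val := by
      simp only [Iseg, Finset.mem_filter, Finset.mem_univ, true_and] at hx; omega
    have : Bm G x j = 0 := by
      simp only [Bm, Matrix.of_apply]
      rw [if_neg, if_neg]
      · simp only [Fin.lt_def]; omega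
      · simp only [Fin.ext_iff]; omega
    simp [this]
  have hdet := Matrix.det_succ_row (G.submatrix
    (Fin.snoc (α := fun _ => Fin r) (Fin.castLE j.2.le) a) (Fin.castLE j.2)) (Fin.last j.val)
  have hL : ∑ i, G a i * Bm G i j = (G.submatrix
      (Fin.snoc (α := fun _ => Fin r) (Fin.castLE j.2.le) a) (Fin.castLE j.2)).det /
        gMinor G (Iseg r j.val) (Iseg r j.val) := by
    rw [hsum, hdet, Finset.sum_div]
    refine Finset.sum_congr rfl fun i _ => ?_
    rw [Bm_castLE G hd]
    have e : ((G.submatrix (Fin.snoc (α := fun _ => Fin r) (Fin.castLE j.2.le) a)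
        (Fin.castLE j.2)).submatrix (Fin.last j.val).succAbove i.succAbove) =
        G.submatrix (Fin.castLE j.2.le) (fun p => Fin.castLE j.2 (i.succAbove p)) := by
      ext p q
      simp [Fin.succAbove_last, Fin.snoc_castSucc]
    rw [e]
    simp only [Matrix.submatrix_apply, Fin.snoc_last, Fin.val_last]
    ring
  rw [hL]
  simp only [Lm, Tm, Matrix.of_apply]
  split_ifs with h1 h2
  · subst h1
    rw [one_mul, gMinor_image G _ _ (snoc_strictMono a.2.le a le_rfl) (castLE_strictMono a.2)
      (Iseg r (a.val + 1)) (Iseg r (a.val + 1)) ((Iseg_succ a).trans (Iseg_union _ _)) (Iseg_eq _)]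
  · rw [gMinor_image G _ _ (snoc_strictMono j.2.le a (le_of_lt h2)) (castLE_strictMono j.2)
      (Iseg r j.val ∪ {a}) (Iseg r (j.val + 1)) (Iseg_union _ _) (Iseg_eq _)]
    field_simp
  · have haj : a.val < j.val := by
      simp only [Fin.ext_iff, Fin.lt_def] at h1 h2; omega
    rw [Matrix.det_zero_of_row_eq (i := (⟨a.val, haj⟩ : Fin j.val).castSucc) (j := Fin.last _)]
    · simp
    · exact (Fin.castSucc_lt_last _).ne
    · ext q
      simp only [Matrix.submatrix_apply, Fin.snoc_castSucc, Fin.snoc_last]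
      rfl

theorem Tm_transpose (G : Matrix (Fin r) (Fin r) K) : Tm G.transpose = Tm G := by
  ext l; simp [Tm, gMinor_transpose]

/-- lower unitriangular times lower unitriangular -/
theorem low_mul (P Q : Matrix (Fin r) (Fin r) K) (hP : ∀ i j, i < j → P i j = 0)
    (hQ : ∀ i j, i < j → Q i j = 0) (hP1 : ∀ i, P i i = 1) (hQ1 : ∀ i, Q i i = 1) :
    (∀ i j, i < j → (P * Q) i j = 0) ∧ ∀ i, (P * Q) i i = 1 := by
  constructor
  · intro i j hij
    rw [Matrix.mul_apply]
    refine Finset.sum_eq_zero fun l _ => ?_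
    rcases lt_or_ge i l with h | h
    · rw [hP _ _ h, zero_mul]
    · rw [hQ _ _ (lt_of_le_of_lt h hij), mul_zero]
  · intro i
    rw [Matrix.mul_apply, Finset.sum_eq_single i]
    · rw [hP1, hQ1, one_mul]
    · intro l _ hl
      rcases lt_or_gt_of_ne hl with h | h
      · rw [hQ _ _ h, mul_zero]
      · rw [hP _ _ h, zero_mul]
    · simp

theorem Lm_low (G : Matrix (Fin r) (Fin r) K) (i j : Fin r) (h : i < j) : Lm G i j = 0 := by
  simp [Lm, h.ne, h.not_gt]

theorem Bm_up (G : Matrix (Fin r) (Fin r) K) (i j : Fin r) (h : j < i) : Bm G i j = 0 := by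
  simp [Bm, h.ne', h.not_gt]

theorem Lm_one (G : Matrix (Fin r) (Fin r) K) (i : Fin r) : Lm G i i = 1 := by simp [Lm]

theorem Bm_one (G : Matrix (Fin r) (Fin r) K) (i : Fin r) : Bm G i i = 1 := by simp [Bm]

theorem main (G : Matrix (Fin r) (Fin r) K)
    (hd : ∀ i ≤ r, gMinor G (Iseg r i) (Iseg r i) ≠ 0) :
    G = Lm G * Matrix.diagonal (Tm G) * (Lm G.transpose).transpose ∧
    (Lm G.transpose).transpose * Bm G = 1 ∧ (Bm G.transpose).transpose * Lm G = 1 := by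
  have h1 := mul_Bm G hd
  have h2 := congrArg Matrix.transpose (mul_Bm G.transpose
    (fun i hi => by rw [gMinor_transpose]; exact hd i hi))
  rw [Matrix.transpose_mul, Matrix.transpose_mul, Matrix.transpose_transpose,
    Matrix.diagonal_transpose, Tm_transpose] at h2
  have hT : ∀ l, Tm G l ≠ 0 := fun l => div_ne_zero (hd _ l.2) (hd _ l.2.le)
  have h3 : (Bm G.transpose).transpose * Lm G * Matrix.diagonal (Tm G) =
      Matrix.diagonal (Tm G) * ((Lm G.transpose).transpose * Bm G) := by
    rw [Matrix.mul_assoc, ← h1, ← Matrix.mul_assoc, h2, Matrix.mul_assoc]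
  obtain ⟨a1, a2⟩ := low_mul (Bm G.transpose).transpose (Lm G)
    (fun i j h => Bm_up _ _ _ h) (Lm_low G) (fun i => Bm_one _ i) (Lm_one G)
  obtain ⟨b1, b2⟩ := low_mul (Bm G).transpose (Lm G.transpose)
    (fun i j h => Bm_up _ _ _ h) (Lm_low _) (fun i => Bm_one _ i) (Lm_one _)
  have e : (Bm G).transpose * Lm G.transpose =
      ((Lm G.transpose).transpose * Bm G).transpose := by
    rw [Matrix.transpose_mul, Matrix.transpose_transpose]
  rw [e] at b1 b2
  simp only [Matrix.transpose_apply] at b1 b2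
  have h4 : ∀ i j, ((Bm G.transpose).transpose * Lm G) i j * Tm G j =
      Tm G i * ((Lm G.transpose).transpose * Bm G) i j := by
    intro i j
    have := congrFun (congrFun h3 i) j
    rwa [Matrix.mul_diagonal, Matrix.diagonal_mul] at this
  have hU : (Lm G.transpose).transpose * Bm G = 1 := by
    ext i j
    rcases lt_trichotomy i j with h | h | h
    · have := h4 i j
      rw [a1 i j h, zero_mul] at this
      rw [Matrix.one_apply_ne h.ne]
      exact (mul_eq_zero.mp this.symm).resolve_left (hT i)
    · subst h; rw [b2, Matrix.one_apply_eq]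
    · rw [b1 _ _ h, Matrix.one_apply_ne h.ne']
  have hC : (Bm G.transpose).transpose * Lm G = 1 := by
    ext i j
    rcases lt_trichotomy i j with h | h | h
    · rw [a1 _ _ h, Matrix.one_apply_ne h.ne]
    · subst h; rw [a2, Matrix.one_apply_eq]
    · have := h4 i j
      rw [b1 j i h, mul_zero] at this
      rw [Matrix.one_apply_ne h.ne']
      exact (mul_eq_zero.mp this).resolve_right (hT j)
  refine ⟨?_, hU, hC⟩
  rw [← h1, Matrix.mul_assoc, mul_eq_one_comm.mp hU, Matrix.mul_one]

theorem minor_ne_zero (k : Type) [Field k] (y : Matrix (Fin r) (Fin r) k) (i : ℕ) (hi : i ≤ r) :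
    gMinor (y.map Polynomial.C +
      (Polynomial.X : Polynomial k) • (1 : Matrix (Fin r) (Fin r) (Polynomial k)))
      (Iseg r i) (Iseg r i) ≠ 0 := by
  rw [gMinor_image _ _ _ (castLE_strictMono hi) (castLE_strictMono hi) _ _ (Iseg_eq hi)
    (Iseg_eq hi)]
  have : (y.map Polynomial.C +
      (Polynomial.X : Polynomial k) • (1 : Matrix (Fin r) (Fin r) (Polynomial k))).submatrix
      (Fin.castLE hi) (Fin.castLE hi) =
      Matrix.charmatrix (-(y.submatrix (Fin.castLE hi) (Fin.castLE hi))) := by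
    ext p q : 2
    rw [Matrix.charmatrix_apply]
    by_cases h : p = q
    · subst h; simp [add_comm]
    · have : Fin.castLE hi p ≠ Fin.castLE hi q := fun e => h (Fin.castLE_injective hi e)
      simp [h, Matrix.one_apply_ne, this]
  rw [this]
  exact (Matrix.charpoly_monic _).ne_zero

end BruhatAux

/-- the explicit Bruhat decomposition `w₀·(y + ϖ·Id) = n·w₀·t·n′` over `k(ϖ)`,
with all the entries of `n`, `t`, `n′` and `n⁻¹` expressed by minors of `g = y + ϖ·Id`. -/
theorem bruhat_decomposition_of_y_plus_varpi
    (k : Type) [Field k] (r : ℕ) (hr : 1 ≤ r)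
    (y : Matrix (Fin r) (Fin r) k) :
    -- `g = y + ϖ·Id` over the polynomial ring `k[ϖ]`
    let gP : Matrix (Fin r) (Fin r) (Polynomial k) :=
      y.map Polynomial.C + (Polynomial.X : Polynomial k) • (1 : Matrix (Fin r) (Fin r) (Polynomial k))
    -- leading principal minors `a_i = det g_{[1,i],[1,i]}` (with `a 0 = 1`)
    let a : ℕ → Polynomial k := fun i => gMinor gP (Iseg r i) (Iseg r i)
    -- everything is viewed in `K = k(ϖ)`
    let φ : Polynomial k → RatFunc k := fun p => algebraMap (Polynomial k) (RatFunc k) p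
    let G : Matrix (Fin r) (Fin r) (RatFunc k) := gP.map φ
    -- the antidiagonal permutation matrix `w₀`
    let w₀ : Matrix (Fin r) (Fin r) (RatFunc k) :=
      Matrix.of fun i j => if j = Fin.rev i then 1 else 0
    -- `t = diag (a₁, a₂/a₁, …, a_r/a_{r-1})`
    let t : Matrix (Fin r) (Fin r) (RatFunc k) :=
      Matrix.diagonal fun l => φ (a (l.val + 1)) / φ (a l.val)
    -- the unipotent matrix `n`
    let n : Matrix (Fin r) (Fin r) (RatFunc k) :=
      Matrix.of fun i j =>
        if i = j then 1 else if i < j then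
          φ (gMinor gP (Iseg r (r - 1 - j.val) ∪ {Fin.rev i}) (Iseg r (r - j.val))) /
            φ (gMinor gP (Iseg r (r - j.val)) (Iseg r (r - j.val)))
        else 0
    -- the unipotent matrix `n′`
    let n' : Matrix (Fin r) (Fin r) (RatFunc k) :=
      Matrix.of fun i j =>
        if i = j then 1 else if i < j then
          φ (gMinor gP (Iseg r (i.val + 1)) (Iseg r i.val ∪ {j})) /
            φ (gMinor gP (Iseg r (i.val + 1)) (Iseg r (i.val + 1)))
        else 0
    -- the unipotent matrix of which `n′` is the inverse
    let B : Matrix (Fin r) (Fin r) (RatFunc k) :=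
      Matrix.of fun i j =>
        if i = j then 1 else if i < j then
          (-1 : RatFunc k) ^ (j.val - i.val) *
            φ (gMinor gP (Iseg r j.val) (Iseg r (j.val + 1) \ {i})) /
            φ (gMinor gP (Iseg r j.val) (Iseg r j.val))
        else 0
    -- the conclusions:
    w₀ * G = n * w₀ * t * n' ∧
    (n' * B = 1 ∧ B * n' = 1) ∧
    (∀ i j : Fin r, i < j →
      n⁻¹ i j = (-1 : RatFunc k) ^ (j.val - i.val) *
        φ (gMinor gP (Iseg r (r - i.val) \ {Fin.rev j}) (Iseg r (r - 1 - i.val))) /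
        φ (gMinor gP (Iseg r (r - 1 - i.val)) (Iseg r (r - 1 - i.val)))) := by
  intro gP a φ G w₀ t n n' B
  have hφ : ∀ I J, φ (gMinor gP I J) = gMinor G I J := fun I J =>
    BruhatAux.gMinor_map (algebraMap (Polynomial k) (RatFunc k)) gP I J
  have hd : ∀ i ≤ r, gMinor G (Iseg r i) (Iseg r i) ≠ 0 := by
    intro i hi
    rw [← hφ]
    exact (map_ne_zero_iff _ (IsFractionRing.injective (Polynomial k) (RatFunc k))).mpr
      (BruhatAux.minor_ne_zero k y i hi)
  obtain ⟨m1, m2, m3⟩ := BruhatAux.main G hd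
  have ht : t = Matrix.diagonal (BruhatAux.Tm G) := by
    simp only [t, a, hφ]; rfl
  have hB : B = BruhatAux.Bm G := by
    simp only [B, hφ]; rfl
  have hn' : n' = (BruhatAux.Lm G.transpose).transpose := by
    ext i j
    simp only [n', hφ, BruhatAux.Lm, Matrix.transpose_apply, Matrix.of_apply,
      BruhatAux.gMinor_transpose, eq_comm]
  have hv : ∀ j : Fin r, r - 1 - j.val = (Fin.rev j).val := fun j => by
    rw [Fin.val_rev]; omega
  have hv' : ∀ j : Fin r, r - j.val = (Fin.rev j).val + 1 := fun j => by
    rw [Fin.val_rev]; omega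
  have hn : n = (BruhatAux.Lm G).submatrix Fin.rev Fin.rev := by
    ext i j
    simp only [n, hφ, BruhatAux.Lm, Matrix.submatrix_apply, Matrix.of_apply, hv, hv',
      Fin.rev_inj, Fin.rev_lt_rev]
  have hw1 : ∀ M : Matrix (Fin r) (Fin r) (RatFunc k), w₀ * M = M.submatrix Fin.rev id := by
    intro M; ext i j
    simp [w₀, Matrix.mul_apply]
  have hw2 : ∀ M : Matrix (Fin r) (Fin r) (RatFunc k), M * w₀ = M.submatrix id Fin.rev := by
    intro M; ext i j
    have : ∀ x : Fin r, (j = x.rev) = (x = j.rev) := fun x => by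
      apply propext
      constructor
      · rintro rfl; simp
      · rintro rfl; simp
    simp [w₀, Matrix.mul_apply, this]
  have hinv : n⁻¹ = ((BruhatAux.Bm G.transpose).transpose).submatrix Fin.rev Fin.rev := by
    apply Matrix.inv_eq_left_inv
    rw [hn]
    have := Matrix.submatrix_mul_equiv (BruhatAux.Bm G.transpose).transpose (BruhatAux.Lm G)
      Fin.rev Fin.revPerm Fin.rev
    have h2 : (Fin.revPerm : Fin r → Fin r) = Fin.rev := rfl
    rw [h2] at this
    rw [this, m3]
    exact Matrix.submatrix_one_equiv Fin.revPerm
  refine ⟨?_, ⟨?_, ?_⟩, ?_⟩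
  · have e : n * w₀ = w₀ * BruhatAux.Lm G := by
      rw [hw1, hw2, hn]
      ext i j
      simp
    rw [e, ht, hn', Matrix.mul_assoc, Matrix.mul_assoc, ← Matrix.mul_assoc (BruhatAux.Lm G), ← m1]
  · rw [hn', hB]; exact m2
  · rw [hn', hB]; exact mul_eq_one_comm.mp m2
  · intro i j hij
    rw [hinv]
    have h1 : Fin.rev j < Fin.rev i := Fin.rev_lt_rev.mpr hij
    have h2 : (Fin.rev i).val - (Fin.rev j).val = j.val - i.val := by
      simp only [Fin.val_rev]; omega
    simp only [Matrix.submatrix_apply, Matrix.transpose_apply, BruhatAux.Bm, Matrix.of_apply,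
      if_neg h1.ne, if_pos h1, h2, hφ, hv, hv', BruhatAux.gMinor_transpose]
end

section
/- Let R be a commutative ring and r ≥ 1. Let g ∈ M_r(R[ϖ]) be a symmetric matrix such that, for every 1 ≤ i ≤ r, the determinant of the leading principal i×i submatrix of g is a monic polynomial of degree i in ϖ. Then there exist an upper triangular matrix u ∈ M_r(R[ϖ]) with all diagonal entries equal to 1 and a symmetric matrix x ∈ M_r(R) such that ᵗu·g·u = x + ϖ·Id_r. -/
open Matrix Polynomial

lemma aux_division {R : Type} [CommRing R] {r : ℕ} (x : Matrix (Fin r) (Fin r) R) (n : ℕ) :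
    ∀ b : Matrix (Fin r) (Fin 1) R[X], (∀ i j, (b i j).natDegree ≤ n) →
    ∃ (v : Matrix (Fin r) (Fin 1) R[X]) (b0 : Matrix (Fin r) (Fin 1) R),
      (x.map C + (X : R[X]) • (1 : Matrix (Fin r) (Fin r) R[X])) * v + b = b0.map C := by
  induction n with
  | zero =>
    intro b hb
    refine ⟨0, b.map (fun p => p.coeff 0), ?_⟩
    ext1 i j
    simp only [Matrix.mul_zero, zero_add, map_apply]
    exact eq_C_of_natDegree_le_zero (hb i j)
  | succ n ih =>
    intro b hb
    obtain ⟨v, b0, h⟩ := ih (b.map divX) (by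
      intro i j
      have := hb i j
      simp only [map_apply, natDegree_divX_eq_natDegree_tsub_one]
      omega)
    have hbb : b = (X : R[X]) • b.map divX + (b.map (fun p : R[X] => p.coeff 0)).map C := by
      ext1 i j
      simp only [Matrix.add_apply, Matrix.smul_apply, map_apply, smul_eq_mul]
      exact (X_mul_divX_add (b i j)).symm
    refine ⟨(X : R[X]) • v - b0.map C, b.map (fun p => p.coeff 0) - x * b0, ?_⟩
    have h2 : (b.map (fun p => p.coeff 0) - x * b0).map (C : R →+* R[X])
        = (b.map (fun p : R[X] => p.coeff 0)).map C - x.map C * b0.map C := by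
      rw [← Matrix.map_mul (f := (C : R →+* R[X]))]
      ext1 i j
      simp only [Matrix.sub_apply, map_apply, map_sub]
    rw [h2]
    have h3 : b.map divX = b0.map C -
      (x.map C + (X : R[X]) • (1 : Matrix (Fin r) (Fin r) R[X])) * v := by
      rw [← h]; abel
    conv_lhs => rw [hbb]
    rw [h3]
    simp only [Matrix.mul_sub, Matrix.add_mul, Matrix.smul_mul, Matrix.mul_smul, Matrix.one_mul,
      smul_sub, smul_add]
    abel

lemma aux_adj {R : Type} [CommRing R] {r : ℕ} (x : Matrix (Fin r) (Fin r) R) (i j : Fin r) :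
    ((x.map C + (X : R[X]) • (1 : Matrix (Fin r) (Fin r) R[X])).adjugate i j).natDegree ≤ r := by
  rw [adjugate_apply]
  have : (x.map C + (X : R[X]) • (1 : Matrix (Fin r) (Fin r) R[X])).updateRow j (Pi.single i 1)
      = (X : R[X]) • ((1 : Matrix (Fin r) (Fin r) R).updateRow j 0).map C
        + (x.updateRow j (Pi.single i 1)).map C := by
    ext1 a b
    by_cases ha : a = j
    · subst ha
      simp [Pi.single_apply, apply_ite C]
    · simp [updateRow_ne ha, Matrix.one_apply, apply_ite C, add_comm]
  rw [this]
  simpa using natDegree_det_X_add_C_le ((1 : Matrix (Fin r) (Fin r) R).updateRow j 0)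
    (x.updateRow j (Pi.single i 1))

lemma aux_det {R : Type} [CommRing R] {r : ℕ} (A : Matrix (Fin r) (Fin r) R)
    (hA : IsRegular A.det) (b : Matrix (Fin r) (Fin 1) R) (c : Matrix (Fin 1) (Fin r) R)
    (d : Matrix (Fin 1) (Fin 1) R) :
    (fromBlocks A b c d).det = d 0 0 * A.det - (c * (A.adjugate * b)) 0 0 := by
  apply hA.right
  have h : fromBlocks A b c d * fromBlocks 1 (-(A.adjugate * b)) 0 (A.det • 1)
      = fromBlocks A 0 c (A.det • d - c * (A.adjugate * b)) := by
    rw [fromBlocks_multiply]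
    congr 1
    · simp
    · rw [Matrix.mul_neg, ← Matrix.mul_assoc, mul_adjugate]
      simp
    · simp
    · simp [sub_eq_add_neg, add_comm]
  have h' := congrArg Matrix.det h
  rw [det_mul, det_fromBlocks_zero₂₁, det_fromBlocks_zero₁₂] at h'
  simp at h'
  simp only []
  rw [h']; ring

lemma aux_step {R : Type} [CommRing R] [Nontrivial R] {r : ℕ} (x : Matrix (Fin r) (Fin r) R)
    (hx : x.IsSymm) (b : Matrix (Fin r) (Fin 1) R[X]) (d : Matrix (Fin 1) (Fin 1) R[X])
    (hM : (fromBlocks (x.map C + (X : R[X]) • (1 : Matrix (Fin r) (Fin r) R[X])) b bᵀ d).det.Monic)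
    (hdeg : (fromBlocks (x.map C + (X : R[X]) • (1 : Matrix (Fin r) (Fin r) R[X]))
      b bᵀ d).det.natDegree = r + 1) :
    ∃ (v : Matrix (Fin r) (Fin 1) R[X]) (y : Matrix (Fin r ⊕ Fin 1) (Fin r ⊕ Fin 1) R),
      y.IsSymm ∧ (fromBlocks 1 v 0 1)ᵀ *
        (fromBlocks (x.map C + (X : R[X]) • (1 : Matrix (Fin r) (Fin r) R[X])) b bᵀ d)
        * (fromBlocks 1 v 0 1) = y.map C + (X : R[X]) • 1 := by
  obtain ⟨v, b0, hv⟩ := aux_division x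
    (Finset.univ.sup fun i => (b i 0).natDegree) b (by
      intro i j
      rw [Subsingleton.elim j 0]
      exact Finset.le_sup (f := fun i => (b i 0).natDegree) (Finset.mem_univ i))
  have hadj := aux_adj x
  have hchar : x.map C + (X : R[X]) • (1 : Matrix (Fin r) (Fin r) R[X]) = charmatrix (-x) := by
    ext1 i j
    by_cases h : i = j
    · subst h; simp [add_comm]
    · simp [h]
  have hAm : (x.map C + (X : R[X]) • (1 : Matrix (Fin r) (Fin r) R[X])).det.Monic := by
    rw [hchar]; exact charpoly_monic (-x)
  have hAd : (x.map C + (X : R[X]) • (1 : Matrix (Fin r) (Fin r) R[X])).det.natDegree = r := by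
    rw [hchar]; exact (charpoly_natDegree_eq_dim (-x)).trans (Fintype.card_fin r)
  have hAs : (x.map C + (X : R[X]) • (1 : Matrix (Fin r) (Fin r) R[X]))ᵀ
      = (x.map C + (X : R[X]) • (1 : Matrix (Fin r) (Fin r) R[X])) := by
    rw [transpose_add, transpose_smul, transpose_one, ← transpose_map, hx]
  generalize hA : x.map C + (X : R[X]) • (1 : Matrix (Fin r) (Fin r) R[X]) = A at *
  have hv' : vᵀ * A + bᵀ = (b0.map C)ᵀ := by
    rw [← hv, transpose_add, transpose_mul, hAs]
  obtain ⟨d', hd'⟩ : ∃ d', d' = (vᵀ * A + bᵀ) * v + (vᵀ * b + d) := ⟨_, rfl⟩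
  have hprod : (fromBlocks 1 v 0 1)ᵀ * (fromBlocks A b bᵀ d) * (fromBlocks 1 v 0 1)
      = fromBlocks A (b0.map C) (b0.map C)ᵀ d' := by
    rw [fromBlocks_transpose, fromBlocks_multiply, fromBlocks_multiply, ← hv', ← hv, hd']
    simp
  have hdet : (fromBlocks A b bᵀ d).det = (fromBlocks A (b0.map C) (b0.map C)ᵀ d').det := by
    rw [← hprod, det_mul, det_mul, det_transpose, det_fromBlocks_zero₂₁]
    simp
  rw [aux_det A hAm.isRegular (b0.map C)] at hdet
  obtain ⟨e, he⟩ : ∃ e, e = ((b0.map C)ᵀ * (A.adjugate * b0.map C)) 0 0 := ⟨_, rfl⟩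
  have hedeg : e.natDegree ≤ r := by
    rw [he]
    simp only [Matrix.mul_apply, transpose_apply, map_apply]
    refine natDegree_sum_le_of_forall_le _ _ fun i _ => ?_
    refine (natDegree_C_mul_le _ _).trans ?_
    refine natDegree_sum_le_of_forall_le _ _ fun j _ => ?_
    exact (natDegree_mul_C_le _ _).trans (hadj i j)
  rw [← he] at hdet
  have hlt : e.degree < (fromBlocks A b bᵀ d).det.degree := by
    apply degree_lt_degree
    omega
  have hsum : d' 0 0 * A.det = (fromBlocks A b bᵀ d).det + e := by rw [hdet]; ring
  have hm : (d' 0 0 * A.det).Monic := by rw [hsum]; exact hM.add_of_left hlt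
  have hn : (d' 0 0 * A.det).natDegree = r + 1 := by
    rw [hsum, natDegree_add_eq_left_of_degree_lt hlt, hdeg]
  have hdm : (d' 0 0).Monic := hAm.of_mul_monic_right hm
  have hd1 : (d' 0 0).natDegree = 1 := by
    rw [hdm.natDegree_mul hAm] at hn; omega
  have hdX := hdm.eq_X_add_C hd1
  refine ⟨v, fromBlocks x b0 b0ᵀ (Matrix.of fun _ _ => (d' 0 0).coeff 0), ?_, ?_⟩
  · rw [Matrix.IsSymm, fromBlocks_transpose, hx]; rfl
  · rw [hprod, ← hA, fromBlocks_map, ← fromBlocks_one, fromBlocks_smul, fromBlocks_add]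
    congr 1
    · simp
    · simp [transpose_map]
    · ext1 i j
      rw [Subsingleton.elim i 0, Subsingleton.elim j 0]
      simp only [Matrix.add_apply, Matrix.smul_apply, map_apply, one_apply_eq, smul_eq_mul, mul_one,
        of_apply]
      rw [add_comm]; exact hdX

lemma aux_main (R : Type) [CommRing R] [Nontrivial R] (r : ℕ) :
    ∀ (g : Matrix (Fin r) (Fin r) (Polynomial R))
    (_ : g.IsSymm)
    (_ : ∀ (i : ℕ) (h : i ≤ r), 1 ≤ i →
      ((g.submatrix (Fin.castLE h) (Fin.castLE h)).det).Monic ∧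
      ((g.submatrix (Fin.castLE h) (Fin.castLE h)).det).natDegree = i),
    ∃ u : Matrix (Fin r) (Fin r) (Polynomial R),
      (∀ i, u i i = 1) ∧ (∀ i j : Fin r, j < i → u i j = 0) ∧
      ∃ x : Matrix (Fin r) (Fin r) R, x.IsSymm ∧
        uᵀ * g * u = x.map Polynomial.C +
          (Polynomial.X : Polynomial R) • (1 : Matrix (Fin r) (Fin r) (Polynomial R)) := by
  induction r with
  | zero =>
    intro g _ _
    exact ⟨1, fun i => i.elim0, fun i => i.elim0, 0, Subsingleton.elim _ _, Subsingleton.elim _ _⟩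
  | succ r ih =>
    intro g hg hmin
    obtain ⟨u0, hu1, hu0, x, hx, hux⟩ := ih (g.submatrix Fin.castSucc Fin.castSucc)
      (hg.submatrix _) (fun i h hi => hmin i (h.trans (Nat.le_succ r)) hi)
    have hdu : u0.det = 1 := by
      rw [det_of_upperTriangular (M := u0) (fun i j h => hu0 i j h)]
      simp [hu1]
    let e : Fin r ⊕ Fin 1 ≃ Fin (r + 1) := finSumFinEquiv
    let B : Matrix (Fin r) (Fin 1) R[X] := g.submatrix Fin.castSucc (fun _ => Fin.last r)
    let D : Matrix (Fin 1) (Fin 1) R[X] := g.submatrix (fun _ => Fin.last r) (fun _ => Fin.last r)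
    have hel : ∀ i, e (Sum.inl i) = Fin.castSucc i := fun i => rfl
    have her : ∀ i, e (Sum.inr i) = Fin.last r := fun i => by
      rw [Subsingleton.elim i 0]; rfl
    have hgB : g.submatrix e e = fromBlocks (g.submatrix Fin.castSucc Fin.castSucc) B Bᵀ D := by
      ext1 i j
      rcases i with i | i <;> rcases j with j | j <;> simp [hel, her, B, D]
      exact (hg.apply _ _)
    have hu : (fromBlocks u0 0 0 1)ᵀ * g.submatrix e e * fromBlocks u0 0 0 1 =
        fromBlocks (x.map C + (X : R[X]) • (1 : Matrix (Fin r) (Fin r) R[X]))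
          (u0ᵀ * B) (u0ᵀ * B)ᵀ D := by
      rw [hgB, fromBlocks_transpose, fromBlocks_multiply, fromBlocks_multiply, ← hux]
      simp
    have hdet : (fromBlocks (x.map C + (X : R[X]) • (1 : Matrix (Fin r) (Fin r) R[X]))
          (u0ᵀ * B) (u0ᵀ * B)ᵀ D).det = g.det := by
      rw [← hu, det_mul, det_mul, det_transpose, det_fromBlocks_zero₂₁, hdu,
        det_submatrix_equiv_self]
      simp
    obtain ⟨hm, hn⟩ := hmin (r + 1) le_rfl (by omega)
    have hgg : g.submatrix (Fin.castLE le_rfl) (Fin.castLE le_rfl) = g := rfl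
    rw [hgg] at hm hn
    obtain ⟨v, y, hy, hvy⟩ := aux_step x hx (u0ᵀ * B) D (hdet ▸ hm) (hdet ▸ hn)
    have hU : fromBlocks u0 0 0 1 * fromBlocks 1 v 0 (1 : Matrix (Fin 1) (Fin 1) R[X])
      = fromBlocks u0 (u0 * v) 0 1 := by
      rw [fromBlocks_multiply]; simp
    have key : (fromBlocks u0 (u0 * v) 0 1)ᵀ * g.submatrix e e * fromBlocks u0 (u0 * v) 0 1
        = y.map C + (X : R[X]) • 1 := by
      rw [← hvy, ← hu, ← hU, transpose_mul]
      simp only [Matrix.mul_assoc]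
    refine ⟨(fromBlocks u0 (u0 * v) 0 1).submatrix e.symm e.symm, ?_, ?_,
      y.submatrix e.symm e.symm, hy.submatrix _, ?_⟩
    · intro i
      obtain ⟨i, rfl⟩ := e.surjective i
      rcases i with i | i <;> simp [hu1]
    · intro i j hij
      obtain ⟨i, rfl⟩ := e.surjective i
      obtain ⟨j, rfl⟩ := e.surjective j
      rcases i with i | i <;> rcases j with j | j <;> simp only [hel, her] at hij
      · simpa using hu0 i j (by simpa using hij)
      · exact absurd hij (not_lt.2 (Fin.le_last _))
      · simp
      · exact absurd hij (lt_irrefl _)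
    · have k := congrArg (fun M => M.submatrix e.symm e.symm) key
      simp only [← submatrix_mul_equiv _ _ e.symm e.symm e.symm] at k
      rw [submatrix_submatrix, ← transpose_submatrix] at k
      simpa [submatrix_add, submatrix_smul, submatrix_map] using k

/-- a symmetric matrix `g` over `R[ϖ]` whose leading principal `i×i` minors are
monic of degree `i` can be reduced, by a unipotent change of basis `u` over `R[ϖ]`, to the
form `x + ϖ·Id` with `x` a symmetric matrix with entries in `R`. -/
theorem symmetric_matrix_reduction_to_linear_pencil
    (R : Type) [CommRing R] (r : ℕ) (hr : 1 ≤ r)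
    (g : Matrix (Fin r) (Fin r) (Polynomial R))
    (hsym : g.IsSymm)
    (hminors : ∀ (i : ℕ) (h : i ≤ r), 1 ≤ i →
      ((g.submatrix (Fin.castLE h) (Fin.castLE h)).det).Monic ∧
      ((g.submatrix (Fin.castLE h) (Fin.castLE h)).det).natDegree = i) :
    ∃ u : Matrix (Fin r) (Fin r) (Polynomial R),
      (∀ i, u i i = 1) ∧ (∀ i j : Fin r, j < i → u i j = 0) ∧
      ∃ x : Matrix (Fin r) (Fin r) R, x.IsSymm ∧
        uᵀ * g * u = x.map Polynomial.C +
          (Polynomial.X : Polynomial R) • (1 : Matrix (Fin r) (Fin r) (Polynomial R)) := by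
  rcases subsingleton_or_nontrivial R with h | h
  · refine ⟨1, fun i => Subsingleton.elim _ _, fun i j _ => Subsingleton.elim _ _, 0, ?_, ?_⟩
    · exact transpose_zero
    · ext1 i j
      exact Subsingleton.elim _ _
  · exact aux_main R r g hsym hminors
end

section
/- Let k be an algebraically closed field and n ≥ 1. Let c : GL_n(k) → kˣ be a map such that c(g·h) = c(g)·c(h) for all g, h ∈ GL_n(k), and suppose there exist m ∈ ℕ and a polynomial P in the n² matrix entries with coefficients in k such that c(g)·det(g)^m = P(g) for all g ∈ GL_n(k). Then there exists an integer s such that c(g) = det(g)^s for all g ∈ GL_n(k). -/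
open Matrix

lemma aux_poly {k : Type} [Field k] [IsAlgClosed k] (q : Polynomial k)
    (h1 : q.eval 1 = 1) (hq : ∀ x : k, x ≠ 0 → q.eval x ≠ 0) :
    ∃ r : ℕ, ∀ x : k, q.eval x = x ^ r := by
  have hq0 : q ≠ 0 := by
    rintro rfl
    simp at h1
  obtain ⟨g, hg, hnd⟩ := q.exists_eq_pow_rootMultiplicity_mul_and_not_dvd hq0 0
  generalize Polynomial.rootMultiplicity 0 q = r at hg
  have hdeg : g.degree = 0 := by
    by_contra hne
    obtain ⟨x, hx⟩ := IsAlgClosed.exists_root g hne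
    by_cases hx0 : x = 0
    · subst hx0
      exact hnd (Polynomial.dvd_iff_isRoot.mpr hx)
    · apply hq x hx0
      rw [hg, Polynomial.eval_mul, hx.eq_zero, mul_zero]
  rw [Polynomial.eq_C_of_degree_eq_zero hdeg] at hg
  have ha : g.coeff 0 = 1 := by
    rw [hg] at h1
    simpa using h1
  refine ⟨r, fun x => ?_⟩
  rw [hg, ha]
  simp

/-- substituting a matrix of polynomials into `P`. -/
lemma aux_eval {k : Type} [Field k] {n : ℕ} (P : MvPolynomial (Fin n × Fin n) k)
    (A : Matrix (Fin n) (Fin n) (Polynomial k)) (x : k) :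
    (MvPolynomial.aeval (fun p => A p.1 p.2) P : Polynomial k).eval x =
      MvPolynomial.eval (fun p => (A p.1 p.2).eval x) P := by
  induction P using MvPolynomial.induction_on with
  | C a => simp
  | add p q hp hq => simp [hp, hq]
  | mul_X p i hp => simp [hp]

lemma aux_main_s11 {k : Type} [Field k] [IsAlgClosed k] {n : ℕ} (i₀ : Fin n)
    (e : Matrix (Fin n) (Fin n) k → k)
    (hne : ∀ M, M.det ≠ 0 → e M ≠ 0)
    (hmul : ∀ M N, M.det ≠ 0 → N.det ≠ 0 → e (M * N) = e M * e N)
    (h1 : e 1 = 1)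
    (m : ℕ) (P : MvPolynomial (Fin n × Fin n) k)
    (hpoly : ∀ M, M.det ≠ 0 → e M * M.det ^ m = MvPolynomial.eval (fun p => M p.1 p.2) P) :
    ∃ s : ℤ, ∀ M, M.det ≠ 0 → e M = M.det ^ s := by
  -- transvections
  have htr : ∀ (t : TransvectionStruct (Fin n) k), e t.toMatrix = 1 := by
    rintro ⟨i, j, hij, x⟩
    have hdet : ∀ y : k, (transvection i j y).det = 1 := fun y => det_transvection_of_ne i j hij y
    set A : Matrix (Fin n) (Fin n) (Polynomial k) := transvection i j Polynomial.X with hA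
    set q : Polynomial k := MvPolynomial.aeval (fun p => A p.1 p.2) P with hqdef
    have hq : ∀ y : k, q.eval y = e (transvection i j y) := by
      intro y
      have := hpoly (transvection i j y) (by rw [hdet]; exact one_ne_zero)
      rw [hdet, one_pow, mul_one] at this
      rw [this, hqdef, aux_eval]
      congr 2
      funext p
      simp only [hA, transvection, Matrix.add_apply, Matrix.one_apply, Matrix.single_apply]
      split_ifs <;> simp
    have hdeg : q.degree = 0 := by
      by_contra hn
      obtain ⟨y, hy⟩ := IsAlgClosed.exists_root q hn
      apply hne (transvection i j y) (by rw [hdet]; exact one_ne_zero)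
      rw [← hq, hy.eq_zero]
    have hc := Polynomial.eq_C_of_degree_eq_zero hdeg
    change e (transvection i j x) = 1
    rw [← hq x, ← h1, ← transvection_zero i j, ← hq 0, hc]
    simp
  -- one-variable diagonal matrices
  let D : Fin n → k → Matrix (Fin n) (Fin n) k := fun i x => diagonal (Function.update 1 i x)
  have hDdet : ∀ i x, (D i x).det = x := by
    intro i x
    simp [D, det_diagonal, Finset.prod_update_of_mem]
  obtain ⟨s, hs⟩ : ∃ s : ℤ, ∀ x, x ≠ 0 → e (D i₀ x) = x ^ s := by
    set A : Matrix (Fin n) (Fin n) (Polynomial k) :=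
      diagonal (Function.update 1 i₀ Polynomial.X) with hA
    set q : Polynomial k := MvPolynomial.aeval (fun p => A p.1 p.2) P with hqdef
    have hq : ∀ y : k, y ≠ 0 → q.eval y = e (D i₀ y) * y ^ m := by
      intro y hy
      have := hpoly (D i₀ y) (by rwa [hDdet])
      rw [hDdet] at this
      rw [this, hqdef, aux_eval]
      congr 2
      funext p
      simp only [hA, D, Matrix.diagonal_apply, Function.update_apply]
      split_ifs <;> simp
    have hD1 : D i₀ 1 = 1 := by
      have : Function.update (1 : Fin n → k) i₀ 1 = 1 := Function.update_eq_self i₀ (1 : Fin n → k)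
      simp only [D, this]
      exact diagonal_one
    obtain ⟨r, hr⟩ := aux_poly q (by rw [hq 1 one_ne_zero, hD1, h1]; simp)
      (fun x hx => by
        rw [hq x hx]
        exact mul_ne_zero (hne _ (by rwa [hDdet])) (pow_ne_zero _ hx))
    refine ⟨(r : ℤ) - m, fun x hx => ?_⟩
    rw [zpow_sub₀ hx, zpow_natCast, zpow_natCast, ← hr x, hq x hx,
      mul_div_cancel_right₀ _ (pow_ne_zero _ hx)]
  have hDi : ∀ i x, x ≠ 0 → e (D i x) = x ^ s := by
    intro i x hx
    rw [← hs x hx]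
    set S : Matrix (Fin n) (Fin n) k := (Equiv.swap i i₀).toPEquiv.toMatrix with hS
    have hSdet : S.det ≠ 0 := by
      have := Matrix.det_permutation (R := k) (Equiv.swap i i₀)
      rw [Equiv.Perm.permMatrix] at this
      rw [hS, this]
      rcases Int.units_eq_one_or (Equiv.Perm.sign (Equiv.swap i i₀)) with h | h <;> simp [h]
    have hcomm : S * D i x = D i₀ x * S := by
      rw [hS, PEquiv.toMatrix_toPEquiv_mul, PEquiv.mul_toMatrix_toPEquiv]
      ext a b
      simp only [D, submatrix_apply, diagonal_apply, Function.update_apply, id,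
        Equiv.symm_swap, Pi.one_apply, Equiv.swap_apply_def]
      grind
    have h := congrArg e hcomm
    rw [hmul _ _ hSdet (by rwa [hDdet]), hmul _ _ (by rwa [hDdet]) hSdet, mul_comm] at h
    exact mul_right_cancel₀ (hne _ hSdet) h
  have hdiag : ∀ d : Fin n → k, (∀ i, d i ≠ 0) → ∀ T : Finset (Fin n),
      e (diagonal (fun i => if i ∈ T then d i else 1)) = (∏ i ∈ T, d i) ^ s := by
    intro d hd T
    induction T using Finset.induction_on with
    | empty => simp [h1]
    | insert a T ha ih =>
      have : diagonal (fun i => if i ∈ insert a T then d i else 1)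
          = D a (d a) * diagonal (fun i => if i ∈ T then d i else 1) := by
        simp only [D, diagonal_mul_diagonal]
        congr 1
        funext i
        simp only [Function.update_apply, Pi.one_apply, Finset.mem_insert]
        grind
      rw [this, hmul _ _ (by rw [hDdet]; exact hd a), ih, hDi _ _ (hd a),
        Finset.prod_insert ha, mul_zpow]
      rw [det_diagonal]
      refine Finset.prod_ne_zero_iff.mpr fun i _ => ?_
      split_ifs
      · exact hd i
      · exact one_ne_zero
  refine ⟨s, fun M hM => ?_⟩
  refine diagonal_transvection_induction_of_det_ne_zero (fun M => e M = M.det ^ s) M hM ?_ ?_ ?_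
  · intro d hd
    rw [det_diagonal] at hd ⊢
    have := hdiag d (fun i => Finset.prod_ne_zero_iff.mp hd i (Finset.mem_univ i)) Finset.univ
    simpa using this
  · intro t
    simp [htr]
  · intro A B hA hB h h'
    rw [hmul A B hA hB, h, h', det_mul, mul_zpow]

/-- a multiplicative map `c : GL_n(k) → kˣ` over an algebraically closed field
which is "polynomial up to a power of the determinant" is an integer power of the
determinant. -/
theorem multiplicative_polynomial_character_is_det_power
    (k : Type) [Field k] [IsAlgClosed k] (n : ℕ) (hn : 1 ≤ n)
    (c : GL (Fin n) k → kˣ)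
    (hmul : ∀ g h : GL (Fin n) k, c (g * h) = c g * c h)
    (m : ℕ) (P : MvPolynomial (Fin n × Fin n) k)
    (hpoly : ∀ g : GL (Fin n) k,
      (c g : k) * ((g : Matrix (Fin n) (Fin n) k).det) ^ m =
        MvPolynomial.eval (fun p => (g : Matrix (Fin n) (Fin n) k) p.1 p.2) P) :
    ∃ s : ℤ, ∀ g : GL (Fin n) k,
      (c g : k) = ((g : Matrix (Fin n) (Fin n) k).det) ^ s := by
  classical
  let e : Matrix (Fin n) (Fin n) k → k := fun M =>
    MvPolynomial.eval (fun p => M p.1 p.2) P / M.det ^ m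
  have hdet : ∀ g : GL (Fin n) k, (g : Matrix (Fin n) (Fin n) k).det ≠ 0 :=
    fun g => ((Matrix.isUnit_iff_isUnit_det _).mp g.isUnit).ne_zero
  have he : ∀ g : GL (Fin n) k, e g = c g := by
    intro g
    simp only [e]
    rw [← hpoly g, mul_div_cancel_right₀ _ (pow_ne_zero _ (hdet g))]
  have hlift : ∀ M : Matrix (Fin n) (Fin n) k, M.det ≠ 0 →
      ∃ g : GL (Fin n) k, (g : Matrix (Fin n) (Fin n) k) = M :=
    fun M hM => (Matrix.isUnit_iff_isUnit_det M).mpr hM.isUnit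
  obtain ⟨s, hs⟩ := aux_main_s11 ⟨0, hn⟩ e
    (fun M hM => by
      obtain ⟨g, rfl⟩ := hlift M hM
      rw [he]
      exact (c g).ne_zero)
    (fun M N hM hN => by
      obtain ⟨g, rfl⟩ := hlift M hM
      obtain ⟨h, rfl⟩ := hlift N hN
      rw [← Units.val_mul, he, he, he, hmul, Units.val_mul])
    (by
      have h := hmul 1 1
      rw [mul_one] at h
      have h' : c 1 = 1 := by simpa using h
      have := he 1
      rw [h'] at this
      simpa using this)
    m P
    (fun M hM => by
      simp only [e]
      rw [div_mul_cancel₀ _ (pow_ne_zero _ hM)])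
  exact ⟨s, fun g => by rw [← he g, hs _ (hdet g)]⟩
end

section
/- Assume moreover that k has characteristic ≠ 2. Let r ≥ 2, let a₁,…,a_r ∈ Fˣ, and fix 1 ≤ i ≤ r−1 such that v(a_i) = 1 and v(a_j) = 0 for all j ≠ i (with the convention a₀ = 1). Put t = diag(a₁, a₂/a₁, …, a_r/a_{r−1}) ∈ GL_r(F) and t̄ = diag(a_i/a_{i−1}, a_{i+1}/a_i) ∈ GL₂(F). Let X(t) = {n ∈ N_r(F)/N_r(O) : ᵗn·t·n ∈ M_r(O)} and X(t̄) = {ñ ∈ N₂(F)/N₂(O) : ᵗñ·t̄·ñ ∈ M₂(O)} (both conditions are invariant under right multiplication by integral unipotent matrices). Then there is a bijection X(t) ≅ X(t̄), n ↦ ñ, such that for every (α₂,…,α_r) ∈ (kˣ)^{r−1} one has Σ_{j=2}^{r} α_j·res(n_{j−1,j}) = α_{i+1}·res(ñ_{1,2}), where res(f) denotes the coefficient of ϖ^{−1} of a Laurent series f (which, applied to the superdiagonal entries, is well defined on classes modulo N_r(O)). -/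
open Matrix

/-- Upper triangular unipotent matrices (the group `N_s`). -/
def IsUnipUT {k : Type} [Field k] {s : ℕ}
    (n : Matrix (Fin s) (Fin s) (LaurentSeries k)) : Prop :=
  (∀ p, n p p = 1) ∧ ∀ p q : Fin s, q < p → n p q = 0

/-- All entries of the matrix lie in `O = k[[ϖ]]`. -/
def IntEntries {k : Type} [Field k] {s : ℕ}
    (M : Matrix (Fin s) (Fin s) (LaurentSeries k)) : Prop :=
  ∀ p q : Fin s, M p q ∈ Set.range ((↑·) : PowerSeries k → LaurentSeries k)

/-- The condition defining `X(t)` : `n` is upper triangular unipotent and `ᵗn·t·n` is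
integral. -/
def XCond {k : Type} [Field k] {s : ℕ}
    (t n : Matrix (Fin s) (Fin s) (LaurentSeries k)) : Prop :=
  IsUnipUT n ∧ IntEntries (nᵀ * t * n)

/-- `n` and `n'` represent the same class in `N_s(F)/N_s(O)`. -/
def NEquiv {k : Type} [Field k] {s : ℕ}
    (n n' : Matrix (Fin s) (Fin s) (LaurentSeries k)) : Prop :=
  IntEntries (n⁻¹ * n')

noncomputable def OO (k : Type) [Field k] : Subring (LaurentSeries k) :=
  (HahnSeries.ofPowerSeries ℤ k).range

section helpers
variable {k : Type} [Field k]

lemma intEntries_iff {s : ℕ} (M : Matrix (Fin s) (Fin s) (LaurentSeries k)) :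
    IntEntries M ↔ ∀ p q, M p q ∈ OO k := Iff.rfl

lemma mem_OO_of_order {x : LaurentSeries k} (h : 0 ≤ x.order) : x ∈ OO k := by
  refine ⟨PowerSeries.X ^ x.order.toNat * x.powerSeriesPart, ?_⟩
  have h1 := LaurentSeries.X_order_mul_powerSeriesPart (f := x) (n := x.order.toNat)
    (Int.toNat_of_nonneg h)
  simpa using h1

lemma coeff_OO {x : LaurentSeries k} (h : x ∈ OO k) : x.coeff (-1) = 0 := by
  obtain ⟨f, rfl⟩ := h
  rw [HahnSeries.ofPowerSeries_apply]
  apply HahnSeries.embDomain_of_notMem_range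
  rintro ⟨n, hn⟩
  have : (n : ℤ) = -1 := hn
  omega

lemma order_inv' {x : LaurentSeries k} (hx : x ≠ 0) : (x⁻¹).order = - x.order := by
  have h := HahnSeries.order_mul hx (inv_ne_zero hx)
  rw [mul_inv_cancel₀ hx, HahnSeries.order_one] at h
  omega

lemma order_div' {x y : LaurentSeries k} (hx : x ≠ 0) (hy : y ≠ 0) :
    (x / y).order = x.order - y.order := by
  rw [div_eq_mul_inv, HahnSeries.order_mul hx (inv_ne_zero hy), order_inv' hy]; ring

lemma pair_int (R : Subring (LaurentSeries k)) {u w x c c' d d' : LaurentSeries k} (h1 : u ∈ R)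
    (h2 : u * x ∈ R) (h3 : u * x ^ 2 + w ∈ R) (hc : c ∈ R) (hc' : c' ∈ R) (hd : d ∈ R)
    (hd' : d' ∈ R) : (c + x * c') * u * (d + x * d') + c' * w * d' ∈ R := by
  have : (c + x * c') * u * (d + x * d') + c' * w * d' =
    u * c * d + u * x * (c * d' + c' * d) + (u * x ^ 2 + w) * (c' * d') := by ring
  rw [this]
  exact R.add_mem (R.add_mem (R.mul_mem (R.mul_mem h1 hc) hd)
    (R.mul_mem h2 (R.add_mem (R.mul_mem hc hd') (R.mul_mem hc' hd))))
    (R.mul_mem h3 (R.mul_mem hc' hd'))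

lemma sum_split {s : ℕ} (g : Fin s → LaurentSeries k) {a b : Fin s} (hab : a ≠ b) :
    ∑ l, g l = g a + g b + ∑ l ∈ (Finset.univ.erase a).erase b, g l := by
  rw [← Finset.add_sum_erase _ g (Finset.mem_univ a),
    ← Finset.add_sum_erase (Finset.univ.erase a) g (a := b) (by simp [hab.symm]), add_assoc]

lemma entry {s : ℕ} (n : Matrix (Fin s) (Fin s) (LaurentSeries k)) (t : Fin s → LaurentSeries k)
    (p q : Fin s) : (nᵀ * Matrix.diagonal t * n) p q = ∑ l, n l p * t l * n l q := by
  rw [Matrix.mul_apply]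
  simp [Matrix.mul_diagonal]

lemma core {s : ℕ} (n : Matrix (Fin s) (Fin s) (LaurentSeries k)) (t : Fin s → LaurentSeries k)
    (a b : Fin s) (hab : a.val + 1 = b.val)
    (ht : ∀ l, l ≠ a → l ≠ b → t l ∈ OO k ∧ (t l)⁻¹ ∈ OO k ∧ t l ≠ 0)
    (hta : t a ∈ OO k) (htab : (t a * t b)⁻¹ ∈ OO k) (hne : t a * t b ≠ 0)
    (hn : XCond (Matrix.diagonal t) n) :
    (t a * n a b ∈ OO k ∧ t a * n a b ^ 2 + t b ∈ OO k) ∧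
    (∀ l q, l ≠ a → n l q ∈ OO k) ∧ (∀ q, n a q - n a b * n b q ∈ OO k) := by
  obtain ⟨⟨hd, hu⟩, hint⟩ := hn
  rw [intEntries_iff] at hint
  simp only [entry] at hint
  set R := OO k
  have hab' : a ≠ b := by intro h; rw [h] at hab; omega
  have hlt : a < b := by rw [Fin.lt_def]; omega
  have hor : ∀ l : Fin s, l ≠ a → l ≠ b → l < a ∨ b < l := by
    intro l h1 h2
    have h1 : l.val ≠ a.val := fun h => h1 (Fin.ext h)
    have h2 : l.val ≠ b.val := fun h => h2 (Fin.ext h)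
    simp only [Fin.lt_def]; omega
  -- rows before a
  have low : ∀ p, p < a → ∀ q, n p q ∈ R := by
    intro p
    induction p using WellFoundedLT.induction with
    | ind p ih =>
    intro hp q
    have h := hint p q
    rw [← Finset.add_sum_erase _ _ (Finset.mem_univ p), hd p, one_mul] at h
    have h2 : ∑ l ∈ Finset.univ.erase p, n l p * t l * n l q ∈ R := by
      refine R.sum_mem fun l hl => ?_
      have hl : l ≠ p := by simpa using hl
      rcases lt_or_gt_of_ne hl with h | h
      · exact R.mul_mem (R.mul_mem (ih l h (h.trans hp) _)
          (ht l (h.trans hp).ne ((h.trans hp).trans hlt).ne).1) (ih l h (h.trans hp) _)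
      · rw [hu _ _ h]; simp
    have h3 := R.sub_mem h h2
    rw [add_sub_cancel_right] at h3
    obtain ⟨_, h4, h5⟩ := ht p hp.ne (hp.trans hlt).ne
    have := R.mul_mem h4 h3
    rwa [inv_mul_cancel_left₀ h5] at this
  have rest : ∀ p, p ≤ b → ∀ q, n a p * t a * n a q + n b p * t b * n b q ∈ R := by
    intro p hp q
    have h := hint p q
    rw [sum_split _ hab'] at h
    have h2 : ∑ l ∈ (Finset.univ.erase a).erase b, n l p * t l * n l q ∈ R := by
      refine R.sum_mem fun l hl => ?_
      simp only [Finset.mem_erase, Finset.mem_univ, and_true] at hl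
      rcases hor l hl.2 hl.1 with h | h
      · exact R.mul_mem (R.mul_mem (low l h _) (ht l hl.2 hl.1).1) (low l h _)
      · rw [hu _ _ (hp.trans_lt h)]; simp
    have h3 := R.sub_mem h h2
    rwa [add_sub_cancel_right] at h3
  have ra : ∀ q, t a * n a q ∈ R := by
    intro q
    have := rest a hlt.le q
    rw [hd, hu b a hlt] at this
    simpa using this
  have rb : ∀ q, n a b * t a * n a q + t b * n b q ∈ R := by
    intro q
    have := rest b le_rfl q
    rw [hd] at this
    simpa using this
  have hx2 : t a * n a b ^ 2 + t b ∈ R := by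
    have := rb b
    rw [hd] at this
    convert this using 1; ring
  have rowb : ∀ q, n b q ∈ R := by
    intro q
    have h := R.mul_mem htab (R.sub_mem (R.mul_mem hta (rb q)) (R.mul_mem (ra b) (ra q)))
    have e : t a * (n a b * t a * n a q + t b * n b q) - t a * n a b * (t a * n a q)
      = t a * t b * n b q := by ring
    rwa [e, inv_mul_cancel_left₀ hne] at h
  have rowa : ∀ q, n a q - n a b * n b q ∈ R := by
    intro q
    have h := R.mul_mem htab (R.sub_mem (R.mul_mem hx2 (ra q)) (R.mul_mem (ra b) (rb q)))
    have e : (t a * n a b ^ 2 + t b) * (t a * n a q) - t a * n a b *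
      (n a b * t a * n a q + t b * n b q)
      = t a * t b * (n a q - n a b * n b q) := by ring
    rwa [e, inv_mul_cancel_left₀ hne] at h
  have pair : ∀ p q, n a p * t a * n a q + n b p * t b * n b q ∈ R := by
    intro p q
    have := pair_int R hta (ra b) hx2 (rowa p) (rowb p) (rowa q) (rowb q)
    simpa using this
  have high : ∀ p, b < p → ∀ q, n p q ∈ R := by
    intro p
    induction p using WellFoundedLT.induction with
    | ind p ih =>
    intro hp q
    have h := hint p q
    have hpa := (hlt.trans hp).ne'
    rw [sum_split _ hab', ← Finset.add_sum_erase _ _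
      (show p ∈ (Finset.univ.erase a).erase b by simp [hp.ne', hpa]), hd p, one_mul] at h
    have h2 : ∑ l ∈ ((Finset.univ.erase a).erase b).erase p, n l p * t l * n l q ∈ R := by
      refine R.sum_mem fun l hl => ?_
      simp only [Finset.mem_erase, Finset.mem_univ, and_true] at hl
      rcases lt_or_gt_of_ne hl.1 with h | h
      · have hr : ∀ q, n l q ∈ R := by
          rcases hor l hl.2.2 hl.2.1 with h' | h'
          · exact low l h'
          · exact ih l h h'
        exact R.mul_mem (R.mul_mem (hr _) (ht l hl.2.2 hl.2.1).1) (hr _)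
      · rw [hu _ _ h]; simp
    have h3 := R.sub_mem (R.sub_mem h (pair p q)) h2
    rw [add_sub_cancel_left, add_sub_cancel_right] at h3
    obtain ⟨_, h4, h5⟩ := ht p hpa hp.ne'
    have := R.mul_mem h4 h3
    rwa [inv_mul_cancel_left₀ h5] at this
  refine ⟨⟨ra b, hx2⟩, ?_, rowa⟩
  intro l q hl
  by_cases hlb : l = b
  · rw [hlb]; exact rowb q
  rcases hor l hl hlb with h | h
  exacts [low l h q, high l h q]

lemma int_mul {s : ℕ} {M N : Matrix (Fin s) (Fin s) (LaurentSeries k)} (hM : IntEntries M)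
    (hN : IntEntries N) : IntEntries (M * N) := by
  rw [intEntries_iff] at *
  intro p q
  rw [Matrix.mul_apply]
  exact (OO k).sum_mem fun l _ => (OO k).mul_mem (hM _ _) (hN _ _)

lemma det_unip {s : ℕ} {M : Matrix (Fin s) (Fin s) (LaurentSeries k)} (hM : IsUnipUT M) :
    M.det = 1 := by
  rw [Matrix.det_of_isUpperTriangular (fun p q h => hM.2 p q h)]
  simp [hM.1]

lemma int_inv {s : ℕ} {M : Matrix (Fin s) (Fin s) (LaurentSeries k)} (hM : IntEntries M)
    (h : M.det = 1) : IntEntries M⁻¹ := by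
  choose C hC using hM
  have e : M = (HahnSeries.ofPowerSeries ℤ k).mapMatrix (Matrix.of C) := by
    ext1 p q; exact (hC p q).symm
  rw [Matrix.inv_def, h, Ring.inverse_one, one_smul, e, ← RingHom.map_adjugate]
  intro p q
  exact ⟨_, rfl⟩

lemma nequiv_iff {s : ℕ} {n n' c c' T T' : Matrix (Fin s) (Fin s) (LaurentSeries k)}
    (hn : n = T * c) (hn' : n' = T' * c') (hc : IntEntries c) (hc' : IntEntries c')
    (dc : c.det = 1) (dc' : c'.det = 1) :
    NEquiv n n' ↔ IntEntries (T⁻¹ * T') := by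
  unfold NEquiv
  have u : IsUnit c.det := by simp [dc]
  have u' : IsUnit c'.det := by simp [dc']
  rw [hn, hn', Matrix.mul_inv_rev]
  constructor
  · intro h
    have := int_mul (int_mul hc h) (int_inv hc' dc')
    convert this using 1
    simp only [← Matrix.mul_assoc]
    rw [Matrix.mul_nonsing_inv _ u, Matrix.one_mul, Matrix.mul_assoc _ c',
      Matrix.mul_nonsing_inv _ u', Matrix.mul_one]
  · intro h
    have := int_mul (int_mul (int_inv hc dc) h) hc'
    convert this using 1
    simp only [Matrix.mul_assoc]

lemma transv_inv {s : ℕ} {a b : Fin s} (hab : a ≠ b) (x : LaurentSeries k) :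
    (Matrix.transvection a b x)⁻¹ = Matrix.transvection a b (-x) := by
  apply Matrix.inv_eq_left_inv
  rw [Matrix.transvection_mul_transvection_same _ _ hab]; simp

lemma transv_apply {s : ℕ} {a b : Fin s} (hab : a ≠ b) (x : LaurentSeries k) (p q : Fin s) :
    Matrix.transvection a b x p q = (1 : Matrix (Fin s) (Fin s) (LaurentSeries k)) p q +
      if p = a then x * (1 : Matrix (Fin s) (Fin s) (LaurentSeries k)) b q else 0 := by
  simp only [Matrix.transvection, Matrix.add_apply, Matrix.single_apply, Matrix.one_apply]
  grind

lemma one_mem_OO {s : ℕ} (p q : Fin s) :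
    (1 : Matrix (Fin s) (Fin s) (LaurentSeries k)) p q ∈ OO k := by
  rw [Matrix.one_apply]; split
  exacts [(OO k).one_mem, (OO k).zero_mem]

lemma transv_int {s : ℕ} {a b : Fin s} (hab : a ≠ b) (x : LaurentSeries k) :
    IntEntries (Matrix.transvection a b x) ↔ x ∈ OO k := by
  rw [intEntries_iff]
  constructor
  · intro h
    have := h a b
    rw [transv_apply hab] at this
    simpa [Matrix.one_apply, hab] using this
  · intro h p q
    rw [transv_apply hab]
    refine (OO k).add_mem (one_mem_OO _ _) ?_
    split
    exacts [(OO k).mul_mem h (one_mem_OO _ _), (OO k).zero_mem]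

lemma transv_unip {s : ℕ} {a b : Fin s} (hab : a < b) (x : LaurentSeries k) :
    IsUnipUT (Matrix.transvection a b x) := by
  constructor
  · intro p
    rw [transv_apply hab.ne]
    simp only [Matrix.one_apply]
    grind
  · intro p q h
    rw [transv_apply hab.ne]
    simp only [Matrix.one_apply]
    grind

lemma transv_xcond {s : ℕ} {a b : Fin s} (hab : a < b) (t : Fin s → LaurentSeries k)
    (x : LaurentSeries k) (ht : ∀ l, l ≠ a → l ≠ b → t l ∈ OO k) (h1 : t a ∈ OO k)
    (h2 : t a * x ∈ OO k) (h3 : t a * x ^ 2 + t b ∈ OO k) :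
    XCond (Matrix.diagonal t) (Matrix.transvection a b x) := by
  refine ⟨transv_unip hab x, ?_⟩
  rw [intEntries_iff]
  intro p q
  rw [entry, sum_split _ hab.ne]
  refine (OO k).add_mem ?_ ((OO k).sum_mem fun l hl => ?_)
  · simp only [transv_apply hab.ne, if_true, if_neg hab.ne', add_zero]
    exact pair_int _ h1 h2 h3 (one_mem_OO _ _) (one_mem_OO _ _) (one_mem_OO _ _) (one_mem_OO _ _)
  · simp only [Finset.mem_erase, Finset.mem_univ, and_true] at hl
    simp only [transv_apply hab.ne, if_neg hl.2, add_zero]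
    exact (OO k).mul_mem ((OO k).mul_mem (one_mem_OO _ _) (ht l hl.2 hl.1)) (one_mem_OO _ _)

/-- Combined structure: every element of X(t) is a transvection times an integral matrix. -/
lemma core_equiv {s : ℕ} (t : Fin s → LaurentSeries k)
    (a b : Fin s) (hab : a.val + 1 = b.val)
    (ht : ∀ l, l ≠ a → l ≠ b → t l ∈ OO k ∧ (t l)⁻¹ ∈ OO k ∧ t l ≠ 0)
    (hta : t a ∈ OO k) (htab : (t a * t b)⁻¹ ∈ OO k) (hne : t a * t b ≠ 0)
    {n n' : Matrix (Fin s) (Fin s) (LaurentSeries k)}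
    (hn : XCond (Matrix.diagonal t) n) (hn' : XCond (Matrix.diagonal t) n') :
    NEquiv n n' ↔ - n a b + n' a b ∈ OO k := by
  have hlt : a < b := by rw [Fin.lt_def]; omega
  have key : ∀ n : Matrix (Fin s) (Fin s) (LaurentSeries k), XCond (Matrix.diagonal t) n →
      n = Matrix.transvection a b (n a b) * (Matrix.transvection a b (- n a b) * n) ∧
      IntEntries (Matrix.transvection a b (- n a b) * n) ∧
      (Matrix.transvection a b (- n a b) * n).det = 1 := by
    intro n hn
    refine ⟨?_, ?_, ?_⟩
    · rw [← Matrix.mul_assoc, Matrix.transvection_mul_transvection_same _ _ hlt.ne]; simp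
    · obtain ⟨_, h1, h2⟩ := core n t a b hab ht hta htab hne hn
      rw [intEntries_iff]
      intro p q
      by_cases hp : p = a
      · subst hp
        rw [Matrix.transvection_mul_apply_same]
        have := h2 q
        rwa [sub_eq_add_neg, ← neg_mul] at this
      · rw [Matrix.transvection_mul_apply_of_ne _ _ _ _ hp]
        exact h1 p q hp
    · rw [Matrix.det_mul, Matrix.det_transvection_of_ne _ _ hlt.ne, det_unip hn.1, one_mul]
  obtain ⟨e, f, g⟩ := key n hn
  obtain ⟨e', f', g'⟩ := key n' hn'
  rw [nequiv_iff e e' f f' g g', transv_inv hlt.ne,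
    Matrix.transvection_mul_transvection_same _ _ hlt.ne, transv_int hlt.ne]

end helpers

/-- for `t = diag(a₁, a₂/a₁, …, a_r/a_{r−1})` with `v(a_i) = 1` and `v(a_j) = 0`
for `j ≠ i`, there is a bijection `X(t) ≅ X(t̄)`, `n ↦ ñ`, with
`t̄ = diag(a_i/a_{i−1}, a_{i+1}/a_i)`, compatible with the residues of the superdiagonal
entries : `Σ_{j=2}^{r} α_j·res(n_{j−1,j}) = α_{i+1}·res(ñ_{1,2})`. -/
theorem reduction_to_rank_two
    (k : Type) [Field k] (hchar : ringChar k ≠ 2)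
    (r : ℕ) (hr : 2 ≤ r)
    (a : ℕ → LaurentSeries k) (ha0 : a 0 = 1)
    (hane : ∀ j : ℕ, j ≤ r → a j ≠ 0)
    (i : ℕ) (hi1 : 1 ≤ i) (hi2 : i ≤ r - 1)
    (hvi : (a i).order = 1)
    (hvj : ∀ j : ℕ, j ≤ r → j ≠ i → (a j).order = 0) :
    -- `t = diag (a₁, a₂/a₁, …, a_r/a_{r-1})`
    let t : Matrix (Fin r) (Fin r) (LaurentSeries k) :=
      Matrix.diagonal fun l => a (l.val + 1) / a l.val
    -- `t̄ = diag (a_i/a_{i−1}, a_{i+1}/a_i)`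
    let t2 : Matrix (Fin 2) (Fin 2) (LaurentSeries k) :=
      Matrix.diagonal fun l => if l = 0 then a i / a (i - 1) else a (i + 1) / a i
    ∃ Φ : {n : Matrix (Fin r) (Fin r) (LaurentSeries k) // XCond t n} →
          {m : Matrix (Fin 2) (Fin 2) (LaurentSeries k) // XCond t2 m},
      -- `Φ` descends to a bijection between the quotients `X(t)` and `X(t̄)` :
      (∀ n n', NEquiv n.1 n'.1 ↔ NEquiv (Φ n).1 (Φ n').1) ∧
      (∀ m : {m : Matrix (Fin 2) (Fin 2) (LaurentSeries k) // XCond t2 m},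
        ∃ n, NEquiv (Φ n).1 m.1) ∧
      -- compatibility of the residues of the superdiagonal entries :
      (∀ n, ∀ α : Fin (r - 1) → k, (∀ j, α j ≠ 0) →
        (∑ j : Fin (r - 1),
            α j * (n.1 ⟨j.1, by have := j.2; omega⟩ ⟨j.1 + 1, by have := j.2; omega⟩).coeff
              (-1)) =
          α ⟨i - 1, by omega⟩ * ((Φ n).1 0 1).coeff (-1)) := by
  intro t t2
  have hlt : i < r := by omega
  let A : Fin r := ⟨i - 1, by omega⟩
  let B : Fin r := ⟨i, hlt⟩
  have hi : i - 1 + 1 = i := by omega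
  let τ : Fin r → LaurentSeries k := fun l => a (l.val + 1) / a l.val
  let σ : Fin 2 → LaurentSeries k := fun l => if l = 0 then a i / a (i - 1) else a (i + 1) / a i
  have σ0 : σ 0 = τ A := by simp [σ, τ, A, hi]
  have σ1 : σ 1 = τ B := by simp [σ, τ, B]
  have hAB : A < B := by rw [Fin.lt_def]; simp only [A, B]; omega
  have hABv : A.val + 1 = B.val := hi
  have o : ∀ l : Fin r, (τ l).order = (a (l.val + 1)).order - (a l.val).order := fun l =>
    order_div' (hane _ l.2) (hane _ l.2.le)
  have nz : ∀ l : Fin r, τ l ≠ 0 := fun l => div_ne_zero (hane _ l.2) (hane _ l.2.le)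
  have ht : ∀ l, l ≠ A → l ≠ B → τ l ∈ OO k ∧ (τ l)⁻¹ ∈ OO k ∧ τ l ≠ 0 := by
    intro l h1 h2
    have h1 : l.val ≠ i - 1 := fun h => h1 (Fin.ext h)
    have h2 : l.val ≠ i := fun h => h2 (Fin.ext h)
    have := o l
    rw [hvj _ l.2 (by omega), hvj _ l.2.le h2] at this
    refine ⟨mem_OO_of_order (by omega), mem_OO_of_order ?_, nz l⟩
    rw [order_inv' (nz l)]; omega
  have oA : (τ A).order = 1 := by
    rw [o]; simp only [A, hi]; rw [hvi, hvj _ (by omega) (by omega)]; simp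
  have oB : (τ B).order = -1 := by
    rw [o]; simp only [B]; rw [hvi, hvj _ (by omega) (by omega)]; simp
  have hta : τ A ∈ OO k := mem_OO_of_order (by omega)
  have hne : τ A * τ B ≠ 0 := mul_ne_zero (nz _) (nz _)
  have htab : (τ A * τ B)⁻¹ ∈ OO k := by
    apply mem_OO_of_order
    rw [order_inv' hne, HahnSeries.order_mul (nz _) (nz _)]; omega
  have hσ : ∀ l : Fin 2, l ≠ 0 → l ≠ 1 → σ l ∈ OO k ∧ (σ l)⁻¹ ∈ OO k ∧ σ l ≠ 0 := by
    intro l h1 h2; omega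
  have h01 : (0 : Fin 2) < 1 := by decide
  have C1 := fun n (hn : XCond (Matrix.diagonal τ) n) => core n τ A B hABv ht hta htab hne hn
  have C2 := fun n (hn : XCond (Matrix.diagonal σ) n) => core n σ 0 1 rfl hσ (σ0 ▸ hta)
    (by rw [σ0, σ1]; exact htab) (by rw [σ0, σ1]; exact hne) hn
  have h01' : (0 : Fin 2) ≠ 1 := by decide
  have tap : ∀ {s : ℕ} {c d : Fin s} (h : c ≠ d) (x : LaurentSeries k),
      Matrix.transvection c d x c d = x := by
    intro s c d h x
    rw [transv_apply h]; simp [Matrix.one_apply, h]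
  refine ⟨fun n => ⟨Matrix.transvection 0 1 (n.1 A B), ?_⟩, ?_, ?_, ?_⟩
  · obtain ⟨⟨h1, h2⟩, _⟩ := C1 n.1 n.2
    exact transv_xcond h01 σ _ (fun l h h' => (hσ l h h').1) (σ0 ▸ hta) (by rwa [σ0])
      (by rwa [σ0, σ1])
  · intro n n'
    rw [core_equiv τ A B hABv ht hta htab hne n.2 n'.2]
    unfold NEquiv
    rw [transv_inv h01', Matrix.transvection_mul_transvection_same _ _ h01', transv_int h01']
  · intro m
    obtain ⟨⟨h1, h2⟩, _⟩ := C2 m.1 m.2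
    rw [σ0] at h1
    rw [σ0, σ1] at h2
    refine ⟨⟨Matrix.transvection A B (m.1 0 1), transv_xcond hAB τ _
      (fun l h h' => (ht l h h').1) hta h1 h2⟩, ?_⟩
    have e : m.1 = Matrix.transvection 0 1 (m.1 0 1) := by
      obtain ⟨hd, hu⟩ := m.2.1
      ext1 p q
      rw [transv_apply h01']
      fin_cases p <;> fin_cases q <;> simp [hd, hu, Matrix.one_apply]
    show NEquiv (Matrix.transvection 0 1 (Matrix.transvection A B (m.1 0 1) A B)) m.1
    rw [tap hAB.ne, ← e]
    unfold NEquiv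
    rw [Matrix.nonsing_inv_mul _ (by simp [det_unip m.2.1])]
    exact one_mem_OO
  · intro n α _
    obtain ⟨_, h1, _⟩ := C1 n.1 n.2
    rw [Finset.sum_eq_single (⟨i - 1, by omega⟩ : Fin (r - 1))]
    · show _ = _ * (Matrix.transvection (0 : Fin 2) 1 (n.1 A B) 0 1).coeff (-1)
      rw [tap h01']
      simp only [A, B, hi]
    · intro j _ hj
      rw [coeff_OO (h1 _ _ ?_), mul_zero]
      intro h
      have h' : j.val = i - 1 := congrArg (fun z : Fin r => z.val) h
      exact hj (Fin.ext h')
    · simp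
end
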